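/- arXiv:0902.0568 — 5 statements merged into one kernel-verified Lean document; each statement's English description precedes it below -/
import Mathlib

section
/- For every Schwartz function x : ℝ → ℂ, one has ℱ(𝔞†x) = i·𝔞†(ℱx) and ℱ(𝔞x) = −i·𝔞(ℱx). -/
open MeasureTheory

/-- The creation operator `𝔞†`: `(𝔞†x)(t) = -x'(t) + t·x(t)`. -/
noncomputable def creation (x : ℝ → ℂ) : ℝ → ℂ := fun t => -deriv x t + (t : ℂ) * x t

/-- The annihilation operator `𝔞`: `(𝔞x)(t) = x'(t) + t·x(t)`. -/
noncomputable def annihilation (x : ℝ → ℂ) : ℝ → ℂ := fun t => deriv x t + (t : ℂ) * x t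

/-- The Fourier operator `(ℱx)(t) = (2π)^{-1/2} ∫ x(ξ) e^{itξ} dξ`. -/
noncomputable def fourierOp (x : ℝ → ℂ) : ℝ → ℂ :=
  fun t => (Real.sqrt (2 * Real.pi) : ℂ)⁻¹ *
    ∫ ξ : ℝ, x ξ * Complex.exp (Complex.I * (t : ℂ) * (ξ : ℂ))

/-! Up to normalization and the rescaling `t ↦ -t / (2π)`, `fourierOp` is the Fourier transform
`𝓕`. Integration by parts gives `ℱ(x') = -it·ℱx`, and differentiation under the integral sign gives
`(ℱx)' = i·ℱ(ξx)`. Thus `ℱ` turns `±x' + ξx` into `∓it·ℱx - i·(ℱx)' = ∓i·(±(ℱx)' + t·ℱx)`. -/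

theorem integrable_of_integrable_norm_mul_norm {V E : Type*} [NormedAddCommGroup V] [ProperSpace V]
    [MeasurableSpace V] [BorelSpace V] [NormedAddCommGroup E] {μ : Measure V} {f : V → E}
    (hf : LocallyIntegrable f μ) (hmul : Integrable (fun v => ‖v‖ * ‖f v‖) μ) :
    Integrable f μ := by
  refine hf.integrable_of_isBigO_cocompact (.of_bound 1 ?_) (hmul.integrableAtFilter _)
  filter_upwards [(tendsto_norm_cocompact_atTop (E := V)).eventually_ge_atTop 1] with v hv
  simpa using le_mul_of_one_le_left (norm_nonneg (f v)) hv

theorem integrable_smul_schwartzMap {𝕜 V F : Type*} [RCLike 𝕜] [NormedAddCommGroup V]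
    [NormedSpace ℝ V] [MeasurableSpace V] [BorelSpace V] [SecondCountableTopology V]
    [NormedAddCommGroup F] [NormedSpace ℝ F] [NormedSpace 𝕜 F] {μ : Measure V}
    [μ.HasTemperateGrowth] {g : V → 𝕜} (hg : g.HasTemperateGrowth) (f : SchwartzMap V F) :
    Integrable (fun v => g v • f v) μ := by
  simpa only [SchwartzMap.smulLeftCLM_apply hg] using (SchwartzMap.smulLeftCLM F g f).integrable

section FourierOp

open scoped FourierTransform

variable {f g : ℝ → ℂ}

theorem fourierOp_eq_fourier (f : ℝ → ℂ) (t : ℝ) :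
    fourierOp f t = (Real.sqrt (2 * Real.pi) : ℂ)⁻¹ * 𝓕 f (-(2 * Real.pi)⁻¹ * t) := by
  rw [fourierOp, Real.fourier_real_eq_integral_exp_smul]
  congr 2 with ξ
  have hπ : (Real.pi : ℂ) ≠ 0 := Complex.ofReal_ne_zero.mpr Real.pi_ne_zero
  rw [smul_eq_mul, mul_comm]
  congr 2
  push_cast
  field_simp

theorem fourierOp_add (hf : Integrable f) (hg : Integrable g) (t : ℝ) :
    fourierOp (fun ξ => f ξ + g ξ) t = fourierOp f t + fourierOp g t := by
  have hfourier := congrFun (VectorFourier.fourierIntegral_add Real.continuous_fourierChar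
    (L := innerₗ ℝ) continuous_inner hf hg) (-(2 * Real.pi)⁻¹ * t)
  simp only [fourierOp_eq_fourier, ← mul_add]
  exact congrArg _ hfourier

theorem fourierOp_const_mul (c : ℂ) (f : ℝ → ℂ) (t : ℝ) :
    fourierOp (fun ξ => c * f ξ) t = c * fourierOp f t := by
  simp only [fourierOp, mul_assoc c, integral_const_mul, mul_left_comm _ c]

theorem fourierOp_neg (f : ℝ → ℂ) (t : ℝ) : fourierOp (fun ξ => -f ξ) t = -fourierOp f t := by
  simpa only [neg_one_mul] using fourierOp_const_mul (-1) f t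

theorem fourierOp_deriv (hf : Integrable f) (hdiff : Differentiable ℝ f)
    (hderiv : Integrable (deriv f)) (t : ℝ) :
    fourierOp (deriv f) t = -Complex.I * t * fourierOp f t := by
  have hπ : (Real.pi : ℂ) ≠ 0 := Complex.ofReal_ne_zero.mpr Real.pi_ne_zero
  rw [fourierOp_eq_fourier, fourierOp_eq_fourier, Real.fourier_deriv hf hdiff hderiv]
  simp only [smul_eq_mul]
  push_cast
  field_simp

theorem hasDerivAt_fourierOp (hf : Integrable f) (hmul : Integrable fun ξ : ℝ => (ξ : ℂ) * f ξ)
    (t : ℝ) :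
    HasDerivAt (fourierOp f) (Complex.I * fourierOp (fun ξ => (ξ : ℂ) * f ξ) t) t := by
  have hπ : (Real.pi : ℂ) ≠ 0 := Complex.ofReal_ne_zero.mpr Real.pi_ne_zero
  have hsmul : Integrable fun ξ : ℝ => ξ • f ξ := by simpa only [Complex.real_smul] using hmul
  have hfourier := ((Real.hasDerivAt_fourier hf hsmul (-(2 * Real.pi)⁻¹ * t)).scomp t
    ((hasDerivAt_id t).const_mul (-(2 * Real.pi)⁻¹))).const_mul (Real.sqrt (2 * Real.pi) : ℂ)⁻¹
  rw [funext (fourierOp_eq_fourier f)]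
  refine hfourier.congr_deriv ?_
  rw [mul_one, mul_smul_comm, ← fourierOp_eq_fourier]
  simp only [smul_eq_mul, mul_assoc _ (Complex.ofReal _), fourierOp_const_mul, Complex.real_smul]
  push_cast
  field_simp

end FourierOp

theorem fourier_creation_annihilation_general {x : ℝ → ℂ} (hdiff : Differentiable ℝ x)
    (hderiv : Integrable (deriv x)) (hmul : Integrable fun ξ : ℝ => (ξ : ℂ) * x ξ) :
    (∀ t : ℝ, fourierOp (creation x) t = Complex.I * creation (fourierOp x) t) ∧
    (∀ t : ℝ, fourierOp (annihilation x) t = -Complex.I * annihilation (fourierOp x) t) := by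
  have hx : Integrable x := integrable_of_integrable_norm_mul_norm
    hdiff.continuous.locallyIntegrable (by simpa using hmul.norm)
  refine ⟨fun t => ?_, fun t => ?_⟩
  · unfold creation
    rw [fourierOp_add (f := fun ξ => -deriv x ξ) hderiv.neg hmul, fourierOp_neg,
      fourierOp_deriv hx hdiff hderiv, (hasDerivAt_fourierOp hx hmul t).deriv]
    linear_combination fourierOp (fun ξ => (ξ : ℂ) * x ξ) t * Complex.I_sq
  · unfold annihilation
    rw [fourierOp_add hderiv hmul, fourierOp_deriv hx hdiff hderiv,
      (hasDerivAt_fourierOp hx hmul t).deriv]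
    linear_combination fourierOp (fun ξ => (ξ : ℂ) * x ξ) t * Complex.I_sq

/-- For every Schwartz function `x`, `ℱ(𝔞†x) = i·𝔞†(ℱx)` and `ℱ(𝔞x) = −i·𝔞(ℱx)`. -/
theorem fourier_creation_annihilation (x : SchwartzMap ℝ ℂ) :
    (∀ t : ℝ, fourierOp (creation ⇑x) t = Complex.I * creation (fourierOp ⇑x) t) ∧
    (∀ t : ℝ, fourierOp (annihilation ⇑x) t = -Complex.I * annihilation (fourierOp ⇑x) t) := by
  exact fourier_creation_annihilation_general x.differentiable
    (SchwartzMap.derivCLM ℂ ℂ x).integrable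
    (integrable_smul_schwartzMap Complex.ofRealCLM.hasTemperateGrowth x)
end

section
/- For every n ≥ 0 the Hermite function h_n is an eigenfunction of the Fourier operator: ℱh_n = iⁿ·h_n, i.e. (2π)^{−1/2} ∫_ℝ h_n(ξ) e^{itξ} dξ = iⁿ·h_n(t) for all t ∈ ℝ. -/
open MeasureTheory

/-- The Hermite functions `h₀(t) = e^{−t²/2}`, `h_{n+1} = 𝔞† h_n`. -/
noncomputable def hermiteFun : ℕ → ℝ → ℂ
  | 0 => fun t => Complex.exp (-(t : ℂ) ^ 2 / 2)
  | n + 1 => creation (hermiteFun n)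

/-!
The Fourier operator turns differentiation into multiplication by `-it` and multiplication by the
variable into `-i d/dt`, so it exchanges the two terms of the creation operator up to the common
factor `i`: `ℱ𝔞† = i𝔞†ℱ`. Since `h₀` is fixed by `ℱ`, every application of `𝔞†` contributes one
factor `i` to the eigenvalue. The analytic side conditions hold because the polynomial multiples of
a Gaussian are integrable and stable under differentiation and multiplication by the variable.
-/

open Polynomial
open scoped FourierTransform

/-- The polynomial multiple `p(t) e^{-bt²}` of a Gaussian, as a function on the real line; the
Hermite functions are of this form with `b = 1/2`. -/
noncomputable def polyGaussian (b : ℂ) (p : ℂ[X]) : ℝ → ℂ :=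
  fun t => p.eval (t : ℂ) * Complex.exp (-b * (t : ℂ) ^ 2)

theorem integrable_polyGaussian {b : ℂ} (hb : 0 < b.re) (p : ℂ[X]) :
    Integrable (polyGaussian b p) := by
  induction p using Polynomial.induction_on' with
  | add p q hp hq =>
    have hadd : polyGaussian b (p + q) = polyGaussian b p + polyGaussian b q := by
      ext t
      simp only [polyGaussian, eval_add, add_mul, Pi.add_apply]
    exact hadd ▸ hp.add hq
  | monomial n a =>
    have hdom : Integrable fun t : ℝ => t ^ (n : ℝ) * Real.exp (-b.re * t ^ 2) :=
      integrable_rpow_mul_exp_neg_mul_sq hb (neg_one_lt_zero.trans_le n.cast_nonneg)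
    refine (hdom.const_mul ‖a‖).mono (by unfold polyGaussian; fun_prop) (.of_forall fun t => ?_)
    rw [polyGaussian, norm_mul, norm_cexp_neg_mul_sq]
    simp [mul_assoc]

theorem hasDerivAt_polyGaussian (b : ℂ) (p : ℂ[X]) (t : ℝ) :
    HasDerivAt (polyGaussian b p) (polyGaussian b (derivative p - C (2 * b) * X * p) t) t := by
  have hexp : HasDerivAt (fun z : ℂ => Complex.exp (-b * z ^ 2))
      (Complex.exp (-b * (t : ℂ) ^ 2) * (-b * (2 * t))) t := by
    simpa using (((hasDerivAt_id (t : ℂ)).pow 2).const_mul (-b)).cexp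
  refine ((p.hasDerivAt (t : ℂ)).mul hexp).comp_ofReal.congr_deriv ?_
  simp only [polyGaussian, eval_sub, eval_mul, eval_C, eval_X]
  ring

theorem deriv_polyGaussian (b : ℂ) (p : ℂ[X]) :
    deriv (polyGaussian b p) = polyGaussian b (derivative p - C (2 * b) * X * p) :=
  funext fun t => (hasDerivAt_polyGaussian b p t).deriv

theorem polyGaussian_X_mul (b : ℂ) (p : ℂ[X]) :
    polyGaussian b (X * p) = fun t : ℝ => (t : ℂ) * polyGaussian b p t := by
  ext t
  simp only [polyGaussian, eval_mul, eval_X, mul_assoc]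

theorem creation_polyGaussian (b : ℂ) (p : ℂ[X]) :
    creation (polyGaussian b p) = polyGaussian b (C (1 + 2 * b) * X * p - derivative p) := by
  ext t
  simp only [creation, deriv_polyGaussian, polyGaussian, eval_sub, eval_mul, eval_C, eval_X]
  ring

theorem creation_const_smul (c : ℂ) (x : ℝ → ℂ) : creation (c • x) = c • creation x := by
  ext t
  simp only [creation, deriv_const_smul_field, Pi.smul_apply, smul_eq_mul]
  ring

theorem exists_hermiteFun_eq_polyGaussian (n : ℕ) :
    ∃ p : ℂ[X], hermiteFun n = polyGaussian (1 / 2) p := by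
  induction n with
  | zero =>
    refine ⟨1, funext fun t => ?_⟩
    simp only [hermiteFun, polyGaussian, eval_one, one_mul]
    ring_nf
  | succ n ih =>
    obtain ⟨p, hp⟩ := ih
    exact ⟨_, by rw [hermiteFun, hp, creation_polyGaussian]⟩

section AngularFourier

/-- The unitary Fourier operator `ℱ` in the angular frequency `t`. Its kernel is `e^{itξ}`, whereas
Mathlib's `𝓕` uses the kernel `e^{-2πitξ}` and no prefactor. -/
noncomputable def angularFourier (x : ℝ → ℂ) : ℝ → ℂ := fun t =>
  (Real.sqrt (2 * Real.pi) : ℂ)⁻¹ *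
    ∫ ξ : ℝ, x ξ * Complex.exp (Complex.I * (t : ℂ) * (ξ : ℂ))

theorem angularFourier_eq_fourier (x : ℝ → ℂ) (t : ℝ) :
    angularFourier x t = (Real.sqrt (2 * Real.pi) : ℂ)⁻¹ * 𝓕 x (-t / (2 * Real.pi)) := by
  rw [angularFourier, Real.fourier_real_eq_integral_exp_smul]
  congr! 3 with ξ
  have hpi : (Real.pi : ℂ) ≠ 0 := Complex.ofReal_ne_zero.2 Real.pi_ne_zero
  rw [smul_eq_mul, mul_comm]
  congr 2
  push_cast
  field_simp

theorem angularFourier_const_smul (c : ℂ) (x : ℝ → ℂ) :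
    angularFourier (c • x) = c • angularFourier x := by
  ext t
  simp only [angularFourier, Pi.smul_apply, smul_eq_mul, mul_assoc, integral_const_mul]
  ring

variable {x y : ℝ → ℂ}

theorem angularFourier_sub (hx : Integrable x) (hy : Integrable y) :
    angularFourier (x - y) = angularFourier x - angularFourier y := by
  have hkernel {z : ℝ → ℂ} (hz : Integrable z) (t : ℝ) :
      Integrable fun ξ : ℝ => z ξ * Complex.exp (Complex.I * (t : ℂ) * (ξ : ℂ)) :=
    hz.mul_bdd (c := 1) (by fun_prop) (.of_forall fun ξ => by simp [Complex.norm_exp])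
  ext t
  simp only [angularFourier, Pi.sub_apply, sub_mul, integral_sub (hkernel hx t) (hkernel hy t),
    mul_sub]

theorem angularFourier_deriv (hx : Integrable x) (hd : Differentiable ℝ x)
    (hx' : Integrable (deriv x)) (t : ℝ) :
    angularFourier (deriv x) t = -Complex.I * t * angularFourier x t := by
  have hpi : (Real.pi : ℂ) ≠ 0 := Complex.ofReal_ne_zero.2 Real.pi_ne_zero
  simp only [angularFourier_eq_fourier, Real.fourier_deriv hx hd hx', smul_eq_mul]
  push_cast
  field_simp

theorem hasDerivAt_angularFourier (hx : Integrable x)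
    (htx : Integrable fun ξ : ℝ => (ξ : ℂ) * x ξ) (t : ℝ) :
    HasDerivAt (angularFourier x)
      (Complex.I * angularFourier (fun ξ : ℝ => (ξ : ℂ) * x ξ) t) t := by
  have hpi : (Real.pi : ℂ) ≠ 0 := Complex.ofReal_ne_zero.2 Real.pi_ne_zero
  have hscale : HasDerivAt (fun s : ℝ => -s / (2 * Real.pi)) (-1 / (2 * Real.pi)) t :=
    (hasDerivAt_id t).neg.div_const _
  have hfourier := Real.hasDerivAt_fourier hx (by simpa using htx) (-t / (2 * Real.pi))
  have hsmul : (fun ξ : ℝ => (-2 * Real.pi * Complex.I * ξ) • x ξ) =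
      (-2 * Real.pi * Complex.I) • fun ξ : ℝ => (ξ : ℂ) * x ξ := by
    ext ξ
    simp only [Pi.smul_apply, smul_eq_mul, mul_assoc]
  rw [funext (angularFourier_eq_fourier x)]
  refine ((hfourier.scomp t hscale).const_mul _).congr_deriv ?_
  rw [mul_smul_comm, ← angularFourier_eq_fourier, hsmul, angularFourier_const_smul,
    Pi.smul_apply, smul_eq_mul, Complex.real_smul]
  push_cast
  field_simp

theorem angularFourier_creation (hx : Integrable x) (hd : Differentiable ℝ x)
    (hx' : Integrable (deriv x)) (htx : Integrable fun ξ : ℝ => (ξ : ℂ) * x ξ) :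
    angularFourier (creation x) = Complex.I • creation (angularFourier x) := by
  have hcreation : creation x = (fun ξ : ℝ => (ξ : ℂ) * x ξ) - deriv x := by
    ext ξ
    simp only [creation, Pi.sub_apply]
    ring
  ext t
  rw [hcreation, angularFourier_sub htx hx', Pi.sub_apply, angularFourier_deriv hx hd hx',
    Pi.smul_apply, creation, (hasDerivAt_angularFourier hx htx t).deriv, smul_eq_mul]
  linear_combination angularFourier (fun ξ : ℝ => (ξ : ℂ) * x ξ) t * Complex.I_sq

theorem angularFourier_creation_polyGaussian {b : ℂ} (hb : 0 < b.re) (p : ℂ[X]) :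
    angularFourier (creation (polyGaussian b p)) =
      Complex.I • creation (angularFourier (polyGaussian b p)) :=
  angularFourier_creation (integrable_polyGaussian hb p)
    (fun t => (hasDerivAt_polyGaussian b p t).differentiableAt)
    (deriv_polyGaussian b p ▸ integrable_polyGaussian hb _)
    (polyGaussian_X_mul b p ▸ integrable_polyGaussian hb _)

theorem angularFourier_hermiteFun_zero : angularFourier (hermiteFun 0) = hermiteFun 0 := by
  ext t
  have hsqrt : ((Real.pi : ℂ) / (1 / 2)) ^ (1 / 2 : ℂ) = Real.sqrt (2 * Real.pi) := by
    rw [Real.sqrt_eq_rpow, Complex.ofReal_cpow Real.two_pi_pos.le]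
    push_cast
    ring_nf
  have hne : (Real.sqrt (2 * Real.pi) : ℂ) ≠ 0 :=
    Complex.ofReal_ne_zero.2 (Real.sqrt_pos.2 Real.two_pi_pos).ne'
  have hgauss := fourierIntegral_gaussian (b := 1 / 2) (by norm_num) (t : ℂ)
  rw [hsqrt] at hgauss
  rw [angularFourier, inv_mul_eq_iff_eq_mul₀ hne]
  convert hgauss using 1
  · congr! 2 with ξ
    rw [mul_comm, hermiteFun]
    ring_nf
  · rw [hermiteFun]
    ring_nf

end AngularFourier

/-- Every Hermite function is an eigenfunction of the Fourier operator:
`(2π)^{−1/2} ∫ h_n(ξ) e^{itξ} dξ = iⁿ·h_n(t)`. -/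
theorem fourier_hermiteFun (n : ℕ) (t : ℝ) :
    (Real.sqrt (2 * Real.pi) : ℂ)⁻¹ *
      ∫ ξ : ℝ, hermiteFun n ξ * Complex.exp (Complex.I * (t : ℂ) * (ξ : ℂ)) =
    Complex.I ^ n * hermiteFun n t := by
  suffices h : angularFourier (hermiteFun n) = Complex.I ^ n • hermiteFun n from congrFun h t
  induction n with
  | zero => rw [angularFourier_hermiteFun_zero, pow_zero, one_smul]
  | succ n ih =>
    obtain ⟨p, hp⟩ := exists_hermiteFun_eq_polyGaussian n
    calc angularFourier (creation (hermiteFun n))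
        = Complex.I • creation (angularFourier (hermiteFun n)) := by
          rw [hp, angularFourier_creation_polyGaussian (by norm_num)]
      _ = Complex.I ^ (n + 1) • creation (hermiteFun n) := by
          rw [ih, creation_const_smul, smul_smul, pow_succ']
end

section
/- For every ζ ∈ ℂ with 0 < Re ζ < 1, the improper integrals lim_{R→+∞} ∫₀^R (cos s)·s^{ζ−1} ds and lim_{R→+∞} ∫₀^R (sin s)·s^{ζ−1} ds exist and equal cos(πζ/2)·Γ(ζ) and sin(πζ/2)·Γ(ζ) respectively, where Γ is the Euler Gamma function. -/
open MeasureTheory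

/-!
The lower incomplete Gamma function `γ(ζ, w) = ∫₀^w t ^ (ζ - 1) * e ^ (-t) dt` is a primitive of
`w ^ (ζ - 1) * e ^ (-w)` on the slit plane, and `γ(ζ, R) → Γ(ζ)` as `R → +∞` along the reals. Let
`z` lie in the slit plane with `0 ≤ Re z`. On the segment from `R z` to `R`, the point
`R (z + t (1 - z))` has real part at least `R t`, so the variation of `γ(ζ, ·)` along the segment
is at most a constant times `R ^ Re ζ * ∫₀¹ e ^ (-R t) dt ≤ R ^ (Re ζ - 1)`, which tends to `0`
when `Re ζ < 1`. Hence `γ(ζ, R z) → Γ(ζ)` too. Since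
`γ(ζ, R z) = z ^ ζ * ∫₀^R e ^ (-z s) * s ^ (ζ - 1) ds`, the cases `z = ± i` and Euler's formulas
give the two Mellin integrals.
-/

section LowerGamma

open Complex Set Filter Topology
open AffineMap (lineMap)

theorem hasDerivAt_intervalIntegral_exp_neg_mul_smul {E : Type*} [NormedAddCommGroup E]
    [NormedSpace ℂ E] {μ : Measure ℝ} {a b : ℝ} {g : ℝ → E} (hg : IntervalIntegrable g μ a b)
    (w : ℂ) :
    HasDerivAt (fun w : ℂ => ∫ s in a..b, exp (-(w * s)) • g s ∂μ)
      (∫ s in a..b, (-s * exp (-(w * s))) • g s ∂μ) w := by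
  have hint {φ : ℝ → ℂ} (hφ : Continuous φ) :
      IntervalIntegrable (fun s => φ s • g s) μ a b := hg.continuousOn_smul hφ.continuousOn
  obtain ⟨C, hC⟩ := ((isCompact_closedBall w 1).prod isCompact_uIcc).exists_bound_of_continuousOn
    (f := fun p : ℂ × ℝ => -p.2 * exp (-(p.1 * p.2))) (s := Metric.closedBall w 1 ×ˢ uIcc a b)
    (by fun_prop)
  refine (intervalIntegral.hasDerivAt_integral_of_dominated_loc_of_deriv_le
    (F := fun (v : ℂ) (s : ℝ) => exp (-(v * s)) • g s)
    (F' := fun (v : ℂ) (s : ℝ) => (-s * exp (-(v * s))) • g s)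
    (bound := fun s => C * ‖g s‖) (Metric.closedBall_mem_nhds w one_pos)
    (Eventually.of_forall fun v => ?_) (hint (by fun_prop)) ?_ ?_ (hg.norm.const_mul C) ?_).2
  · exact (intervalIntegrable_iff.1 (hint (by fun_prop))).aestronglyMeasurable
  · exact (intervalIntegrable_iff.1 (hint (by fun_prop))).aestronglyMeasurable
  · refine Eventually.of_forall fun s hs v hv => ?_
    rw [norm_smul]
    gcongr
    exact hC (v, s) ⟨hv, uIoc_subset_uIcc hs⟩
  · refine Eventually.of_forall fun s _ v _ => ?_
    have hexp : HasDerivAt (fun v : ℂ => exp (-(v * s))) (-s * exp (-(v * s))) v := by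
      simpa [mul_comm] using ((hasDerivAt_id v).mul_const (s : ℂ)).fun_neg.cexp
    exact hexp.smul_const (g s)

theorem mul_cpow_sub_one {ζ : ℂ} (hζ : ζ ≠ 0) (s : ℂ) : s * s ^ (ζ - 1) = s ^ ζ := by
  rcases eq_or_ne s 0 with rfl | hs
  · simp [hζ]
  · rw [cpow_sub _ _ hs, cpow_one, mul_div_cancel₀ _ hs]

theorem ofReal_mul_cpow {R : ℝ} (hR : 0 < R) {z : ℂ} (hz : z ≠ 0) (w : ℂ) :
    (R * z) ^ w = (R : ℂ) ^ w * z ^ w := by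
  have hR' : (R : ℂ) ≠ 0 := ofReal_ne_zero.2 hR.ne'
  rw [cpow_def_of_ne_zero (mul_ne_zero hR' hz), cpow_def_of_ne_zero hR',
    cpow_def_of_ne_zero hz, log_ofReal_mul hR hz, ofReal_log hR.le, add_mul, exp_add]

theorem norm_ofReal_mul_cpow_mul_exp_neg {R : ℝ} (hR : 0 < R) {z : ℂ} (hz : z ≠ 0) (w : ℂ) :
    ‖(R * z) ^ w * exp (-(R * z))‖ = R ^ w.re * ‖z ^ w‖ * Real.exp (-(R * z.re)) := by
  rw [norm_mul, ofReal_mul_cpow hR hz, norm_mul, norm_cpow_eq_rpow_re_of_pos hR, norm_exp, neg_re,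
    re_ofReal_mul]

/-- The lower incomplete Gamma function `γ(ζ, w) = ∫₀^w t ^ (ζ - 1) * e ^ (-t) dt`. The path of
integration is the segment `t = w * s`, and the factor `w ^ ζ` that it produces is taken on the
principal branch. -/
noncomputable def lowerGamma (ζ w : ℂ) : ℂ :=
  w ^ ζ * ∫ s in (0 : ℝ)..1, exp (-(w * s)) * (s : ℂ) ^ (ζ - 1)

theorem lowerGamma_ofReal_mul (ζ : ℂ) {R : ℝ} (hR : 0 < R) {z : ℂ} (hz : z ≠ 0) :
    lowerGamma ζ (R * z) = z ^ ζ * ∫ s in (0 : ℝ)..R, exp (-(z * s)) * (s : ℂ) ^ (ζ - 1) := by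
  have hR' : (R : ℂ) ≠ 0 := ofReal_ne_zero.2 hR.ne'
  have hsubst : ∫ s in (0 : ℝ)..R, exp (-(z * s)) * (s : ℂ) ^ (ζ - 1) =
      R ^ ζ * ∫ s in (0 : ℝ)..1, exp (-(R * z * s)) * (s : ℂ) ^ (ζ - 1) := by
    have hscale := intervalIntegral.smul_integral_comp_mul_left (a := 0) (b := 1)
      (fun s : ℝ => exp (-(z * s)) * (s : ℂ) ^ (ζ - 1)) R
    rw [mul_zero, mul_one] at hscale
    rw [← hscale, real_smul, ← intervalIntegral.integral_const_mul,
      ← intervalIntegral.integral_const_mul]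
    refine intervalIntegral.integral_congr fun s hs => ?_
    rw [uIcc_of_le zero_le_one] at hs
    simp only [ofReal_mul, mul_cpow_ofReal_nonneg hR.le hs.1, cpow_sub _ _ hR', cpow_one]
    field_simp
  rw [lowerGamma, ofReal_mul_cpow hR hz, hsubst]
  ring

variable {ζ : ℂ}

theorem mul_integral_exp_neg_mul_mul_cpow (h0 : 0 < ζ.re) (w : ℂ) (R : ℝ) :
    w * ∫ s in (0 : ℝ)..R, exp (-(w * s)) * (s : ℂ) ^ ζ =
      ζ * (∫ s in (0 : ℝ)..R, exp (-(w * s)) * (s : ℂ) ^ (ζ - 1)) - exp (-(w * R)) * R ^ ζ := by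
  have hζ : ζ ≠ 0 := by rintro rfl; simp at h0
  have hparts := intervalIntegral.integral_mul_deriv_eq_deriv_mul_of_hasDerivAt
    (a := 0) (b := R) (u := fun s : ℝ => exp (-(w * s))) (u' := fun s : ℝ => -w * exp (-(w * s)))
    (v := fun s : ℝ => (s : ℂ) ^ ζ) (v' := fun s : ℝ => ζ * (s : ℂ) ^ (ζ - 1))
    (by fun_prop) (continuous_ofReal_cpow_const h0).continuousOn
    (fun s _ => by
      simpa [mul_comm] using ((hasDerivAt_id (s : ℂ)).const_mul w).fun_neg.cexp.comp_ofReal)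
    (fun s hs => hasDerivAt_ofReal_cpow_const (by rintro rfl; grind) hζ)
    (Continuous.intervalIntegrable (by fun_prop) _ _)
    ((intervalIntegral.intervalIntegrable_cpow' (by simpa using h0)).const_mul ζ)
  simp only [mul_left_comm _ ζ, mul_assoc, intervalIntegral.integral_const_mul, ofReal_zero,
    zero_cpow hζ, mul_zero, sub_zero] at hparts
  linear_combination -hparts

theorem hasDerivAt_lowerGamma (h0 : 0 < ζ.re) {w : ℂ} (hw : w ∈ slitPlane) :
    HasDerivAt (lowerGamma ζ) (w ^ (ζ - 1) * exp (-w)) w := by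
  have hζ : ζ ≠ 0 := by rintro rfl; simp at h0
  have hint := hasDerivAt_intervalIntegral_exp_neg_mul_smul
    (intervalIntegral.intervalIntegrable_cpow' (a := 0) (b := 1) (r := ζ - 1) (by simpa using h0)) w
  have hshift (s : ℝ) : (-s * exp (-(w * s))) • (s : ℂ) ^ (ζ - 1) =
      -(exp (-(w * s)) * (s : ℂ) ^ ζ) := by
    rw [← mul_cpow_sub_one hζ, smul_eq_mul]; ring
  have hparts := mul_integral_exp_neg_mul_mul_cpow h0 w 1
  refine (((hasDerivAt_id w).cpow_const (c := ζ) hw).fun_mul hint).congr_deriv ?_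
  simp only [hshift, smul_eq_mul, intervalIntegral.integral_neg, id, mul_one, ofReal_one,
    one_cpow] at hparts ⊢
  rw [← mul_cpow_sub_one hζ w]
  linear_combination -w ^ (ζ - 1) * hparts

theorem tendsto_lowerGamma_ofReal_atTop (h0 : 0 < ζ.re) :
    Tendsto (fun R : ℝ => lowerGamma ζ R) atTop (𝓝 (Gamma ζ)) := by
  rw [Gamma_eq_integral h0]
  refine (tendsto_partialGamma h0).congr' ?_
  filter_upwards [eventually_gt_atTop 0] with R hR
  simpa [partialGamma] using (lowerGamma_ofReal_mul ζ hR one_ne_zero).symm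

theorem ofReal_mul_mem_slitPlane {R : ℝ} (hR : 0 < R) {z : ℂ} (hz : z ∈ slitPlane) :
    R * z ∈ slitPlane := by
  simpa [mem_slitPlane_iff, hR, hR.ne'] using hz

theorem lineMap_one_mem_slitPlane {z : ℂ} (hz : z ∈ slitPlane) {t : ℝ} (ht : t ∈ Icc (0 : ℝ) 1) :
    lineMap z 1 t ∈ slitPlane := by
  refine starConvex_one_slitPlane.segment_subset hz ?_
  rw [segment_symm, segment_eq_image_lineMap]
  exact mem_image_of_mem _ ht

theorem le_re_lineMap_one {z : ℂ} (hre : 0 ≤ z.re) {t : ℝ} (ht : t ≤ 1) :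
    t ≤ (lineMap z 1 t : ℂ).re := by
  have : 0 ≤ (1 - t) * z.re := mul_nonneg (sub_nonneg.2 ht) hre
  simpa [AffineMap.lineMap_apply_module]

theorem exists_norm_lineMap_one_cpow_le {z : ℂ} (hz : z ∈ slitPlane) (w : ℂ) :
    ∃ M, ∀ t ∈ Icc (0 : ℝ) 1, ‖(lineMap z 1 t : ℂ) ^ w‖ ≤ M :=
  isCompact_Icc.exists_bound_of_continuousOn
    (AffineMap.lineMap_continuous.continuousOn.cpow_const fun _ => lineMap_one_mem_slitPlane hz)

theorem hasDerivAt_lowerGamma_ofReal_mul_lineMap_one (h0 : 0 < ζ.re) {z : ℂ} (hz : z ∈ slitPlane)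
    {R : ℝ} (hR : 0 < R) {t : ℝ} (ht : t ∈ Icc (0 : ℝ) 1) :
    HasDerivAt (fun t : ℝ => lowerGamma ζ (R * lineMap z 1 t))
      ((R * lineMap z 1 t) ^ (ζ - 1) * exp (-(R * lineMap z 1 t)) * (R * (1 - z))) t := by
  have hmem := ofReal_mul_mem_slitPlane hR (lineMap_one_mem_slitPlane hz ht)
  have hline : HasDerivAt (fun t : ℝ => R * (lineMap z 1 t : ℂ)) (R * (1 - z)) t :=
    AffineMap.hasDerivAt_lineMap.const_mul (R : ℂ)
  exact (hasDerivAt_lowerGamma h0 hmem).comp t hline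

theorem norm_lowerGamma_ofReal_mul_sub_le (h0 : 0 < ζ.re) {z : ℂ} (hz : z ∈ slitPlane)
    (hre : 0 ≤ z.re) {M : ℝ}
    (hM : ∀ t ∈ Icc (0 : ℝ) 1, ‖(lineMap z 1 t : ℂ) ^ (ζ - 1)‖ ≤ M) {R : ℝ} (hR : 0 < R) :
    ‖lowerGamma ζ (R * z) - lowerGamma ζ R‖ ≤ M * ‖1 - z‖ * R ^ (ζ.re - 1) := by
  have hM0 : 0 ≤ M := (norm_nonneg _).trans (hM 0 (by simp))
  set K := M * ‖1 - z‖ * R ^ (ζ.re - 1) with hK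
  have hmajorant (t : ℝ) : HasDerivAt (fun t : ℝ => K * (1 - Real.exp (-(R * t))))
      (K * (R * Real.exp (-(R * t)))) t := by
    simpa [mul_comm] using (((hasDerivAt_id t).const_mul R).fun_neg.exp.const_sub 1).const_mul K
  have hderiv (t : ℝ) (ht : t ∈ Icc (0 : ℝ) 1) :=
    (hasDerivAt_lowerGamma_ofReal_mul_lineMap_one h0 hz hR ht).sub_const (lowerGamma ζ (R * z))
  have hdominated (t : ℝ) (ht : t ∈ Icc (0 : ℝ) 1) :
      ‖(R * lineMap z 1 t) ^ (ζ - 1) * exp (-(R * lineMap z 1 t)) * (R * (1 - z))‖ ≤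
        K * (R * Real.exp (-(R * t))) := by
    rw [norm_mul, norm_ofReal_mul_cpow_mul_exp_neg hR
      (slitPlane_ne_zero (lineMap_one_mem_slitPlane hz ht)), norm_mul, norm_real,
      Real.norm_of_nonneg hR.le, sub_re, one_re]
    calc R ^ (ζ.re - 1) * ‖(lineMap z 1 t : ℂ) ^ (ζ - 1)‖ *
          Real.exp (-(R * (lineMap z 1 t : ℂ).re)) * (R * ‖1 - z‖)
        ≤ R ^ (ζ.re - 1) * M * Real.exp (-(R * t)) * (R * ‖1 - z‖) := by
          gcongr
          · exact hM t ht
          · exact le_re_lineMap_one hre ht.2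
      _ = K * (R * Real.exp (-(R * t))) := by rw [hK]; ring
  have hvariation := image_norm_le_of_norm_deriv_right_le_deriv_boundary
    (fun t ht => (hderiv t ht).continuousAt.continuousWithinAt)
    (fun t ht => (hderiv t (Ico_subset_Icc_self ht)).hasDerivWithinAt) (by simp) hmajorant
    (fun t ht => hdominated t (Ico_subset_Icc_self ht)) (right_mem_Icc.2 zero_le_one)
  calc ‖lowerGamma ζ (R * z) - lowerGamma ζ R‖ ≤ K * (1 - Real.exp (-(R * 1))) := by
        simpa [norm_sub_rev] using hvariation
    _ ≤ K := mul_le_of_le_one_right (by positivity) (sub_le_self _ (Real.exp_pos _).le)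

theorem tendsto_lowerGamma_ofReal_mul_atTop (h0 : 0 < ζ.re) (h1 : ζ.re < 1) {z : ℂ}
    (hz : z ∈ slitPlane) (hre : 0 ≤ z.re) :
    Tendsto (fun R : ℝ => lowerGamma ζ (R * z)) atTop (𝓝 (Gamma ζ)) := by
  obtain ⟨M, hM⟩ := exists_norm_lineMap_one_cpow_le hz (ζ - 1)
  have hdecay : Tendsto (fun R : ℝ => M * ‖1 - z‖ * R ^ (ζ.re - 1)) atTop (𝓝 0) := by
    simpa using (tendsto_rpow_neg_atTop (sub_pos.2 h1)).const_mul (M * ‖1 - z‖)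
  have hsub : Tendsto (fun R : ℝ => lowerGamma ζ (R * z) - lowerGamma ζ R) atTop (𝓝 0) :=
    squeeze_zero_norm' ((eventually_gt_atTop 0).mono fun _ hR =>
      norm_lowerGamma_ofReal_mul_sub_le h0 hz hre hM hR) hdecay
  simpa using hsub.add (tendsto_lowerGamma_ofReal_atTop h0)

theorem tendsto_integral_exp_neg_mul_mul_cpow (h0 : 0 < ζ.re) (h1 : ζ.re < 1) {z : ℂ}
    (hz : z ∈ slitPlane) (hre : 0 ≤ z.re) :
    Tendsto (fun R : ℝ => ∫ s in (0 : ℝ)..R, exp (-(z * s)) * (s : ℂ) ^ (ζ - 1)) atTop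
      (𝓝 (z ^ (-ζ) * Gamma ζ)) := by
  have hz0 := slitPlane_ne_zero hz
  refine ((tendsto_lowerGamma_ofReal_mul_atTop h0 h1 hz hre).const_mul (z ^ (-ζ))).congr' ?_
  filter_upwards [eventually_gt_atTop 0] with R hR
  rw [lowerGamma_ofReal_mul ζ hR hz0, ← mul_assoc, ← cpow_add _ _ hz0, neg_add_cancel, cpow_zero,
    one_mul]

end LowerGamma

section Euler

open Complex

theorem cos_pi_mul_div_two_eq_cpow (ζ : ℂ) :
    cos (Real.pi * ζ / 2) = (I ^ (-ζ) + (-I) ^ (-ζ)) / 2 := by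
  rw [cpow_def_of_ne_zero I_ne_zero, cpow_def_of_ne_zero (neg_ne_zero.2 I_ne_zero), log_I,
    log_neg_I, cos]
  ring_nf

theorem sin_pi_mul_div_two_eq_cpow (ζ : ℂ) :
    sin (Real.pi * ζ / 2) = I / 2 * (I ^ (-ζ) - (-I) ^ (-ζ)) := by
  rw [cpow_def_of_ne_zero I_ne_zero, cpow_def_of_ne_zero (neg_ne_zero.2 I_ne_zero), log_I,
    log_neg_I, sin]
  ring_nf

variable {μ : Measure ℝ} {a b : ℝ} {g : ℝ → ℂ}

theorem integral_cos_mul_eq_integral_exp (hg : IntervalIntegrable g μ a b) :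
    ∫ s in a..b, (Real.cos s : ℂ) * g s ∂μ =
      ((∫ s in a..b, exp (-(I * s)) * g s ∂μ) + ∫ s in a..b, exp (-(-I * s)) * g s ∂μ) / 2 := by
  rw [← intervalIntegral.integral_add (hg.continuousOn_mul (by fun_prop))
    (hg.continuousOn_mul (by fun_prop)), ← intervalIntegral.integral_div]
  congr with s
  rw [ofReal_cos, cos]
  ring_nf

theorem integral_sin_mul_eq_integral_exp (hg : IntervalIntegrable g μ a b) :
    ∫ s in a..b, (Real.sin s : ℂ) * g s ∂μ =
      I / 2 * ((∫ s in a..b, exp (-(I * s)) * g s ∂μ) -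
        ∫ s in a..b, exp (-(-I * s)) * g s ∂μ) := by
  rw [← intervalIntegral.integral_sub (hg.continuousOn_mul (by fun_prop))
    (hg.continuousOn_mul (by fun_prop)), ← intervalIntegral.integral_const_mul]
  congr with s
  rw [ofReal_sin, sin]
  ring_nf

end Euler

/-- For `0 < Re ζ < 1`, `lim_{R→∞} ∫₀^R (cos s)·s^{ζ−1} ds = cos(πζ/2)·Γ(ζ)` and
`lim_{R→∞} ∫₀^R (sin s)·s^{ζ−1} ds = sin(πζ/2)·Γ(ζ)`. -/
theorem cos_sin_mellin_integrals (ζ : ℂ) (h0 : 0 < ζ.re) (h1 : ζ.re < 1) :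
    Filter.Tendsto (fun R : ℝ => ∫ s in (0:ℝ)..R, (Real.cos s : ℂ) * (s : ℂ) ^ (ζ - 1))
      Filter.atTop
      (nhds (Complex.cos (Real.pi * ζ / 2) * Complex.Gamma ζ)) ∧
    Filter.Tendsto (fun R : ℝ => ∫ s in (0:ℝ)..R, (Real.sin s : ℂ) * (s : ℂ) ^ (ζ - 1))
      Filter.atTop
      (nhds (Complex.sin (Real.pi * ζ / 2) * Complex.Gamma ζ)) := by
  have hpow (R : ℝ) : IntervalIntegrable (fun s : ℝ => (s : ℂ) ^ (ζ - 1)) volume 0 R :=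
    intervalIntegral.intervalIntegrable_cpow' (by simpa using h0)
  have hpos := tendsto_integral_exp_neg_mul_mul_cpow (z := Complex.I) h0 h1
    (by simp [Complex.mem_slitPlane_iff]) (by simp)
  have hneg := tendsto_integral_exp_neg_mul_mul_cpow (z := -Complex.I) h0 h1
    (by simp [Complex.mem_slitPlane_iff]) (by simp)
  constructor
  · simp only [integral_cos_mul_eq_integral_exp (hpow _), cos_pi_mul_div_two_eq_cpow,
      div_mul_eq_mul_div, add_mul]
    exact (hpos.add hneg).div_const 2
  · simp only [integral_sin_mul_eq_integral_exp (hpow _), sin_pi_mul_div_two_eq_cpow,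
      mul_assoc, sub_mul]
    exact (hpos.sub hneg).const_mul (Complex.I / 2)
end

section
/- Let x : [0,∞) → ℂ be such that x is integrable and square integrable on (0,∞), its cosine Fourier transform x̂_c(t) = √(2/π)·∫₀^∞ x(s)·cos(ts) ds is integrable on (0,∞), and both x and x̂_c are continuous on [0,∞) and tend to 0 at +∞. Then for every ζ on the line Re ζ = 1/2, the Mellin transforms satisfy φ_{x̂_c}(ζ) = φ_x(1−ζ) · 2^{ζ−1/2} · Γ(ζ/2) / Γ(1/2 − ζ/2), where φ_f(ζ) = ∫₀^∞ t^{ζ−1} f(t) dt (the value φ_{x̂_c}(ζ) being the limit as R → ∞ of ∫₀^R t^{ζ−1} x̂_c(t) dt). -/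
open MeasureTheory

/-- The cosine Fourier transform `x̂_c(t) = √(2/π)·∫₀^∞ x(s)·cos(ts) ds`. -/
noncomputable def cosFT (x : ℝ → ℂ) : ℝ → ℂ :=
  fun t => (Real.sqrt (2 / Real.pi) : ℂ) *
    ∫ s in Set.Ioi (0:ℝ), x s * (Real.cos (t * s) : ℂ)

/-!
By Fubini and the substitution `t ↦ t / s`, the Mellin transform of `cosFT x` truncated at `R` is
`√(2/π) ∫₀^∞ s^{-ζ} x(s) K(R s) ds`, where `K(R) = ∫₀ᴿ t^{ζ-1} cos t dt`. For `0 < Re ζ < 1` the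
function `K` is bounded and converges to some `L`, so dominated convergence gives
`√(2/π) · L · φ_x(1-ζ)` in the limit. The factor `√(2/π) · L` does not depend on `x`; its value is
read off from the self-dual Gaussian `exp (-t²/2)`.
-/

open Filter Set Topology

/-- The truncated Mellin transform `∫₀ᴿ t^{ζ−1} cos t dt` of the cosine, which converges only
conditionally as `R → ∞`. -/
noncomputable def truncatedMellinCos (ζ : ℂ) (R : ℝ) : ℂ :=
  ∫ t in (0 : ℝ)..R, (t : ℂ) ^ (ζ - 1) * (Real.cos t : ℂ)

lemma integrableOn_Ioi_cpow_mul {f : ℝ → ℂ} {a : ℂ} (ha : -1 < a.re) (ha0 : a.re ≤ 0)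
    (hf : IntegrableOn f (Ioi 0)) (hfc : ContinuousOn f (Icc 0 1)) :
    IntegrableOn (fun t : ℝ => (t : ℂ) ^ a * f t) (Ioi 0) := by
  rw [← Ioc_union_Ioi_eq_Ioi (zero_le_one' ℝ)]
  refine IntegrableOn.union ?_ ?_
  · have hpow : IntegrableOn (fun t : ℝ => (t : ℂ) ^ a) (Icc 0 1) := by
      rw [integrableOn_Icc_iff_integrableOn_Ioc,
        ← intervalIntegrable_iff_integrableOn_Ioc_of_le zero_le_one]
      exact intervalIntegral.intervalIntegrable_cpow' ha
    exact (hpow.mul_continuousOn hfc isCompact_Icc).mono_set Ioc_subset_Icc_self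
  · refine Integrable.bdd_mul (c := 1) (hf.mono_set (Ioi_subset_Ioi zero_le_one))
      (Measurable.pow_const (by fun_prop) _).aestronglyMeasurable ?_
    filter_upwards [ae_restrict_mem measurableSet_Ioi] with t (ht : 1 < t)
    rw [Complex.norm_cpow_eq_rpow_re_of_pos (by linarith)]
    exact Real.rpow_le_one_of_one_le_of_nonpos ht.le ha0

lemma exists_norm_le_Ici_of_tendsto_atTop {E : Type*} [SeminormedAddCommGroup E] {f : ℝ → E}
    {a : ℝ} {l : E} (hf : ContinuousOn f (Ici a)) (hl : Tendsto f atTop (𝓝 l)) :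
    ∃ C, ∀ t ∈ Ici a, ‖f t‖ ≤ C := by
  obtain ⟨B, hB⟩ := hl.norm.isBoundedUnder_le
  obtain ⟨M, hM⟩ := eventually_atTop.1 (eventually_map.1 hB)
  obtain ⟨D, hD⟩ := (isCompact_Icc (a := a) (b := M)).exists_bound_of_continuousOn
    (hf.mono Icc_subset_Ici_self)
  refine ⟨max B D, fun t ht => ?_⟩
  rcases le_total M t with hMt | htM
  · exact (hM t hMt).trans (le_max_left _ _)
  · exact (hD t ⟨ht, htM⟩).trans (le_max_right _ _)

section TruncatedMellinCos

variable {ζ : ℂ}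

lemma intervalIntegrable_cpow_mul_cos (hζ : 0 < ζ.re) (a b : ℝ) :
    IntervalIntegrable (fun t : ℝ => (t : ℂ) ^ (ζ - 1) * (Real.cos t : ℂ)) volume a b :=
  (intervalIntegral.intervalIntegrable_cpow' (by simpa using hζ)).mul_continuousOn (by fun_prop)

lemma continuous_truncatedMellinCos (hζ : 0 < ζ.re) : Continuous (truncatedMellinCos ζ) :=
  intervalIntegral.continuous_primitive (intervalIntegrable_cpow_mul_cos hζ) 0

lemma hasDerivAt_truncatedMellinCos (hζ : 0 < ζ.re) {R : ℝ} (hR : 0 < R) :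
    HasDerivAt (truncatedMellinCos ζ) ((R : ℂ) ^ (ζ - 1) * (Real.cos R : ℂ)) R := by
  have hcont : ContinuousAt (fun t : ℝ => (t : ℂ) ^ (ζ - 1) * (Real.cos t : ℂ)) R :=
    (Complex.continuousAt_ofReal_cpow_const _ _ (.inr hR.ne')).mul (by fun_prop)
  exact intervalIntegral.integral_hasDerivAt_right (intervalIntegrable_cpow_mul_cos hζ 0 R)
    (Measurable.stronglyMeasurable (by fun_prop)).stronglyMeasurableAtFilter hcont

lemma tendsto_cpow_mul_sin_atTop (hζ : ζ.re < 1) :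
    Tendsto (fun R : ℝ => (R : ℂ) ^ (ζ - 1) * (Real.sin R : ℂ)) atTop (𝓝 0) := by
  have hpow : Tendsto (fun R : ℝ => R ^ (-(1 - ζ.re))) atTop (𝓝 0) :=
    tendsto_rpow_neg_atTop (by linarith)
  refine squeeze_zero_norm' ?_ hpow
  filter_upwards [eventually_gt_atTop 0] with R hR
  rw [norm_mul, Complex.norm_cpow_eq_rpow_re_of_pos hR, Complex.norm_real, Complex.sub_re,
    Complex.one_re, neg_sub]
  exact mul_le_of_le_one_right (by positivity) (Real.abs_sin_le_one R)

lemma exists_tendsto_truncatedMellinCos (hζ0 : 0 < ζ.re) (hζ1 : ζ.re < 1) :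
    ∃ L, Tendsto (truncatedMellinCos ζ) atTop (𝓝 L) := by
  -- Integration by parts: subtracting the boundary term `R^{ζ−1} sin R`, which vanishes at
  -- infinity, leaves a function with absolutely integrable derivative.
  have hderiv : ∀ R ∈ Ioi (1 : ℝ), HasDerivAt
      (fun R : ℝ => truncatedMellinCos ζ R - (R : ℂ) ^ (ζ - 1) * (Real.sin R : ℂ))
      (-((ζ - 1) * ((R : ℂ) ^ (ζ - 2) * (Real.sin R : ℂ)))) R := by
    intro R hR
    have hR0 : 0 < R := zero_lt_one.trans hR
    have hne : ζ - 1 ≠ 0 := fun h => by simp [sub_eq_zero.1 h] at hζ1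
    have hpow := hasDerivAt_ofReal_cpow_const hR0.ne' hne
    convert! (hasDerivAt_truncatedMellinCos hζ0 hR0).sub
      (hpow.mul (Real.hasDerivAt_sin R).ofReal_comp) using 1
    rw [show ζ - 1 - 1 = ζ - 2 by ring]
    ring
  have hint : IntegrableOn
      (fun R : ℝ => -((ζ - 1) * ((R : ℂ) ^ (ζ - 2) * (Real.sin R : ℂ)))) (Ioi 1) := by
    have hpow : IntegrableOn (fun R : ℝ => (R : ℂ) ^ (ζ - 2)) (Ioi 1) :=
      integrableOn_Ioi_cpow_of_lt (by simp; linarith) one_pos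
    refine ((hpow.mul_bdd (c := 1) (by fun_prop) (.of_forall fun R => ?_)).const_mul _).neg
    rw [Complex.norm_real]
    exact Real.abs_sin_le_one R
  have hlim := tendsto_limUnder_of_hasDerivAt_of_integrableOn_Ioi hderiv hint
  exact ⟨_, by simpa using hlim.add (tendsto_cpow_mul_sin_atTop hζ1)⟩

lemma intervalIntegral_cpow_mul_cos_mul (ζ : ℂ) {R s : ℝ} (hR : 0 ≤ R) (hs : 0 < s) :
    ∫ t in (0 : ℝ)..R, (t : ℂ) ^ (ζ - 1) * (Real.cos (t * s) : ℂ) =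
      (s : ℂ) ^ (-ζ) * truncatedMellinCos ζ (R * s) := by
  have hs0 : (s : ℂ) ≠ 0 := by exact_mod_cast hs.ne'
  have hscale := intervalIntegral.integral_comp_mul_right (a := 0) (b := R)
    (fun t : ℝ => (t : ℂ) ^ (ζ - 1) * (Real.cos t : ℂ)) hs.ne'
  rw [zero_mul, ← truncatedMellinCos, eq_inv_smul_iff₀ hs.ne'] at hscale
  rw [← hscale, Complex.real_smul, ← intervalIntegral.integral_const_mul,
    ← intervalIntegral.integral_const_mul]
  refine intervalIntegral.integral_congr fun t ht => ?_
  have ht0 : 0 ≤ t := (uIcc_of_le hR ▸ ht).1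
  have hpow : (s : ℂ) ^ (-ζ) * s * (s : ℂ) ^ (ζ - 1) = 1 := by
    nth_rw 2 [← Complex.cpow_one (s : ℂ)]
    rw [← Complex.cpow_add _ _ hs0, ← Complex.cpow_add _ _ hs0]
    simp
  simp only [Complex.ofReal_mul, Complex.mul_cpow_ofReal_nonneg ht0 hs.le]
  linear_combination (-(t : ℂ) ^ (ζ - 1) * (Real.cos (t * s) : ℂ)) * hpow

end TruncatedMellinCos

section CosFT

variable {x : ℝ → ℂ} {ζ : ℂ}

lemma intervalIntegral_cpow_mul_cosFT (hζ : 0 < ζ.re) (hx : IntegrableOn x (Ioi 0))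
    {R : ℝ} (hR : 0 ≤ R) :
    ∫ t in (0 : ℝ)..R, (t : ℂ) ^ (ζ - 1) * cosFT x t =
      (Real.sqrt (2 / Real.pi) : ℂ) *
        ∫ s in Ioi (0 : ℝ), (s : ℂ) ^ (-ζ) * x s * truncatedMellinCos ζ (R * s) := by
  have hpow : IntegrableOn (fun t : ℝ => (t : ℂ) ^ (ζ - 1)) (Ioc 0 R) :=
    (intervalIntegrable_iff_integrableOn_Ioc_of_le hR).1
      (intervalIntegral.intervalIntegrable_cpow' (by simpa using hζ))
  have hprod : Integrable (Function.uncurry fun t s : ℝ =>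
      (t : ℂ) ^ (ζ - 1) * x s * (Real.cos (t * s) : ℂ))
      ((volume.restrict (Ioc 0 R)).prod (volume.restrict (Ioi 0))) := by
    refine (hpow.mul_prod hx).mul_bdd (c := 1)
      (Continuous.aestronglyMeasurable (by fun_prop)) (.of_forall fun p => ?_)
    rw [Complex.norm_real]
    exact Real.abs_cos_le_one _
  calc ∫ t in (0 : ℝ)..R, (t : ℂ) ^ (ζ - 1) * cosFT x t
      = (Real.sqrt (2 / Real.pi) : ℂ) * ∫ t in Ioc 0 R, ∫ s in Ioi (0 : ℝ),
          (t : ℂ) ^ (ζ - 1) * x s * (Real.cos (t * s) : ℂ) := by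
        simp only [intervalIntegral.integral_of_le hR, cosFT, mul_assoc, integral_const_mul,
          mul_left_comm _ (Real.sqrt (2 / Real.pi) : ℂ)]
    _ = (Real.sqrt (2 / Real.pi) : ℂ) * ∫ s in Ioi (0 : ℝ), x s *
          ∫ t in (0 : ℝ)..R, (t : ℂ) ^ (ζ - 1) * (Real.cos (t * s) : ℂ) := by
        rw [integral_integral_swap hprod]
        simp only [intervalIntegral.integral_of_le hR, mul_assoc, mul_left_comm _ (x _),
          integral_const_mul]
    _ = _ := by
        congr 1
        refine setIntegral_congr_fun measurableSet_Ioi fun s hs => ?_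
        simp only [intervalIntegral_cpow_mul_cos_mul ζ hR hs]
        ring

lemma tendsto_intervalIntegral_cpow_mul_cosFT {L : ℂ} (hζ : 0 < ζ.re)
    (hL : Tendsto (truncatedMellinCos ζ) atTop (𝓝 L)) (hx : IntegrableOn x (Ioi 0))
    (hxζ : IntegrableOn (fun t : ℝ => (t : ℂ) ^ (-ζ) * x t) (Ioi 0)) :
    Tendsto (fun R : ℝ => ∫ t in (0 : ℝ)..R, (t : ℂ) ^ (ζ - 1) * cosFT x t) atTop
      (𝓝 ((Real.sqrt (2 / Real.pi) : ℂ) * L * ∫ t in Ioi (0 : ℝ), (t : ℂ) ^ (-ζ) * x t)) := by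
  have hcont := continuous_truncatedMellinCos hζ
  obtain ⟨C, hC⟩ := exists_norm_le_Ici_of_tendsto_atTop (a := 0) hcont.continuousOn hL
  have hlim : Tendsto
      (fun R : ℝ => ∫ s in Ioi (0 : ℝ), (s : ℂ) ^ (-ζ) * x s * truncatedMellinCos ζ (R * s))
      atTop (𝓝 (∫ s in Ioi (0 : ℝ), (s : ℂ) ^ (-ζ) * x s * L)) := by
    refine tendsto_integral_filter_of_dominated_convergence
      (fun s => ‖(s : ℂ) ^ (-ζ) * x s‖ * C) (.of_forall fun R => ?_) ?_ (hxζ.norm.mul_const C) ?_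
    · exact hxζ.aestronglyMeasurable.mul
        (hcont.comp (continuous_const_mul R)).aestronglyMeasurable
    · filter_upwards [eventually_ge_atTop 0] with R hR
      filter_upwards [ae_restrict_mem measurableSet_Ioi] with s (hs : 0 < s)
      rw [norm_mul]
      gcongr
      exact hC _ (mul_nonneg hR hs.le)
    · filter_upwards [ae_restrict_mem measurableSet_Ioi] with s hs
      exact (hL.comp (tendsto_id.atTop_mul_const hs)).const_mul _
  rw [integral_mul_const] at hlim
  rw [mul_assoc, mul_comm L]
  refine (hlim.const_mul _).congr' ?_
  filter_upwards [eventually_ge_atTop 0] with R hR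
  exact (intervalIntegral_cpow_mul_cosFT hζ hx hR).symm

end CosFT

lemma integral_Ioi_cexp_neg_mul_sq_mul_cos {b : ℂ} (hb : 0 < b.re) (t : ℂ) :
    ∫ s in Ioi (0 : ℝ), Complex.exp (-b * s ^ 2) * Complex.cos (t * s) =
      (Real.pi / b) ^ (1 / 2 : ℂ) / 2 * Complex.exp (-t ^ 2 / (4 * b)) := by
  set F : ℝ → ℂ := fun s => Complex.exp (Complex.I * t * s) * Complex.exp (-b * s ^ 2) with hF
  have hint : Integrable F := by
    have hquad := integrable_cexp_quadratic' (b := -b) (by simpa using hb) (Complex.I * t) 0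
    refine hquad.congr (.of_forall fun s => ?_)
    simp only [hF, ← Complex.exp_add]
    ring_nf
  have heven (s : ℝ) : F s + F (-s) = 2 * (Complex.exp (-b * s ^ 2) * Complex.cos (t * s)) := by
    simp only [hF, Complex.cos, Complex.ofReal_neg, neg_sq]
    ring_nf
  have hfold : ∫ s, F s =
      2 * ∫ s in Ioi (0 : ℝ), Complex.exp (-b * s ^ 2) * Complex.cos (t * s) := by
    calc ∫ s, F s = (∫ s in Ioi (0 : ℝ), F s) + ∫ s in Ioi (0 : ℝ), F (-s) := by
          rw [integral_comp_neg_Ioi, neg_zero, add_comm,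
            intervalIntegral.integral_Iic_add_Ioi hint.integrableOn hint.integrableOn]
      _ = _ := by
          rw [← integral_add hint.integrableOn hint.comp_neg.integrableOn]
          simp only [heven, integral_const_mul]
  linear_combination (-1 / 2) * hfold + (1 / 2) * fourierIntegral_gaussian hb t

lemma cosFT_cexp_neg_half_mul_sq :
    cosFT (fun t => Complex.exp (-(1 / 2) * t ^ 2)) =
      fun t : ℝ => Complex.exp (-(1 / 2) * t ^ 2) := by
  ext t
  have hconst : (Real.sqrt (2 / Real.pi) : ℂ) * ((Real.pi / (1 / 2)) ^ (1 / 2 : ℂ) / 2) = 1 := by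
    have hpow : ((Real.pi : ℂ) / (1 / 2)) ^ (1 / 2 : ℂ) = (Real.sqrt (Real.pi * 2) : ℂ) := by
      rw [Real.sqrt_eq_rpow, Complex.ofReal_cpow (by positivity)]
      push_cast
      ring_nf
    have hsqrt : Real.sqrt (2 / Real.pi) * Real.sqrt (Real.pi * 2) = 2 := by
      rw [← Real.sqrt_mul (by positivity), Real.sqrt_eq_iff_mul_self_eq (by positivity) two_pos.le]
      field_simp
    rw [hpow, ← mul_div_assoc, ← Complex.ofReal_mul, hsqrt]
    norm_num
  have hint := integral_Ioi_cexp_neg_mul_sq_mul_cos (b := 1 / 2) (by norm_num) t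
  simp only [cosFT, Complex.ofReal_cos, Complex.ofReal_mul, hint, ← mul_assoc]
  rw [mul_assoc _ (_ / 2) _, ← mul_assoc, hconst, one_mul]
  ring_nf

lemma mellin_cexp_neg_mul_sq {b : ℝ} (hb : 0 < b) {ζ : ℂ} (hζ : 0 < ζ.re) :
    mellin (fun t : ℝ => Complex.exp (-b * t ^ 2)) ζ =
      (1 / b) ^ (ζ / 2) * Complex.Gamma (ζ / 2) / 2 := by
  have hsq := mellin_comp_rpow (fun t : ℝ => Complex.exp (-(b * t))) ζ 2
  have hexp : mellin (fun t : ℝ => Complex.exp (-(b * t))) (ζ / 2) =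
      (1 / b) ^ (ζ / 2) * Complex.Gamma (ζ / 2) :=
    Complex.integral_cpow_mul_exp_neg_mul_Ioi (by simpa using hζ) hb
  rw [Complex.ofReal_ofNat, hexp, abs_two, Complex.real_smul] at hsq
  simp only [Real.rpow_two, Complex.ofReal_pow, ← neg_mul] at hsq
  rw [hsq]
  push_cast
  ring

lemma integrableOn_Ioi_cpow_mul_cexp_neg_mul_sq {b a : ℂ} (hb : 0 < b.re) (ha : -1 < a.re) :
    IntegrableOn (fun t : ℝ => (t : ℂ) ^ a * Complex.exp (-b * t ^ 2)) (Ioi 0) := by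
  refine (integrable_norm_iff (Measurable.aestronglyMeasurable (by fun_prop))).1 ?_
  refine (integrableOn_rpow_mul_exp_neg_mul_sq hb ha).congr_fun (fun t ht => ?_) measurableSet_Ioi
  simp only [norm_mul, Complex.norm_cpow_eq_rpow_re_of_pos ht, norm_cexp_neg_mul_sq]

lemma sqrt_mul_eq_of_tendsto_truncatedMellinCos {ζ L : ℂ} (hζ0 : 0 < ζ.re) (hζ1 : ζ.re < 1)
    (hL : Tendsto (truncatedMellinCos ζ) atTop (𝓝 L)) :
    (Real.sqrt (2 / Real.pi) : ℂ) * L =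
      (2 : ℂ) ^ (ζ - 1 / 2) * Complex.Gamma (ζ / 2) / Complex.Gamma (1 / 2 - ζ / 2) := by
  set g : ℝ → ℂ := fun t => Complex.exp (-(1 / 2) * t ^ 2) with hg
  have hmellin {w : ℂ} (hw : 0 < w.re) :
      ∫ t in Ioi (0 : ℝ), (t : ℂ) ^ (w - 1) * g t = 2 ^ (w / 2) * Complex.Gamma (w / 2) / 2 := by
    simpa [mellin, hg] using mellin_cexp_neg_mul_sq one_half_pos hw
  have hint {a : ℂ} (ha : -1 < a.re) :
      IntegrableOn (fun t : ℝ => (t : ℂ) ^ a * g t) (Ioi 0) :=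
    integrableOn_Ioi_cpow_mul_cexp_neg_mul_sq (by norm_num) ha
  have hlim := tendsto_intervalIntegral_cpow_mul_cosFT hζ0 hL
    (integrable_cexp_neg_mul_sq (b := 1 / 2) (by norm_num)).integrableOn
    (hint (a := -ζ) (by simpa using hζ1))
  rw [cosFT_cexp_neg_half_mul_sq] at hlim
  have hself := tendsto_nhds_unique hlim <| intervalIntegral_tendsto_integral_Ioi 0
    (hint (a := ζ - 1) (by simpa using hζ0)) tendsto_id
  rw [show -ζ = 1 - ζ - 1 by ring, hmellin (by simpa using hζ1), hmellin hζ0,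
    show (1 - ζ) / 2 = 1 / 2 - ζ / 2 by ring] at hself
  have hGamma : Complex.Gamma (1 / 2 - ζ / 2) ≠ 0 :=
    Complex.Gamma_ne_zero_of_re_pos (by norm_num; linarith)
  have hpow : (2 : ℂ) ^ (ζ - 1 / 2) * 2 ^ (1 / 2 - ζ / 2) = 2 ^ (ζ / 2) := by
    rw [← Complex.cpow_add _ _ two_ne_zero]
    ring_nf
  rw [eq_div_iff hGamma]
  refine mul_right_cancel₀ (b := (2 : ℂ) ^ (1 / 2 - ζ / 2)) (by simp [Complex.cpow_eq_zero_iff]) ?_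
  linear_combination 2 * hself - Complex.Gamma (ζ / 2) * hpow

theorem mellin_of_cosine_transform_general {x : ℝ → ℂ} {ζ : ℂ} (hζ0 : 0 < ζ.re) (hζ1 : ζ.re < 1)
    (hx : IntegrableOn x (Ioi 0))
    (hxζ : IntegrableOn (fun t : ℝ => (t : ℂ) ^ (-ζ) * x t) (Ioi 0)) :
    Tendsto (fun R : ℝ => ∫ t in (0 : ℝ)..R, (t : ℂ) ^ (ζ - 1) * cosFT x t) atTop
      (𝓝 ((∫ t in Ioi (0 : ℝ), (t : ℂ) ^ (-ζ) * x t) * (2 : ℂ) ^ (ζ - 1 / 2) *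
        Complex.Gamma (ζ / 2) / Complex.Gamma (1 / 2 - ζ / 2))) := by
  obtain ⟨L, hL⟩ := exists_tendsto_truncatedMellinCos hζ0 hζ1
  have hlim := tendsto_intervalIntegral_cpow_mul_cosFT hζ0 hL hx hxζ
  rw [sqrt_mul_eq_of_tendsto_truncatedMellinCos hζ0 hζ1 hL] at hlim
  convert! hlim using 2
  ring

/-- For a "c-good" function `x` (integrable and square integrable on `(0,∞)`, with
integrable cosine transform, both continuous on `[0,∞)` and vanishing at `+∞`), the
Mellin transform of `x̂_c` on the line `Re ζ = 1/2` satisfies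
`φ_{x̂_c}(ζ) = φ_x(1−ζ)·2^{ζ−1/2}·Γ(ζ/2)/Γ(1/2−ζ/2)`, where `φ_{x̂_c}(ζ)` is the limit of
`∫₀^R t^{ζ−1} x̂_c(t) dt` as `R → ∞` and `φ_x(1−ζ) = ∫₀^∞ t^{−ζ} x(t) dt`. -/
theorem mellin_of_cosine_transform (x : ℝ → ℂ)
    (hx1 : IntegrableOn x (Set.Ioi 0) volume)
    (hx2 : IntegrableOn (fun t => ‖x t‖ ^ 2) (Set.Ioi 0) volume)
    (hc1 : IntegrableOn (cosFT x) (Set.Ioi 0) volume)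
    (hxc : ContinuousOn x (Set.Ici 0))
    (hcc : ContinuousOn (cosFT x) (Set.Ici 0))
    (hx0 : Filter.Tendsto x Filter.atTop (nhds 0))
    (hc0 : Filter.Tendsto (cosFT x) Filter.atTop (nhds 0)) :
    ∀ ζ : ℂ, ζ.re = 1 / 2 →
      Filter.Tendsto (fun R : ℝ => ∫ t in (0:ℝ)..R, (t : ℂ) ^ (ζ - 1) * cosFT x t)
        Filter.atTop
        (nhds ((∫ t in Set.Ioi (0:ℝ), (t : ℂ) ^ (-ζ) * x t) *
          (2 : ℂ) ^ (ζ - 1 / 2) * Complex.Gamma (ζ / 2) /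
            Complex.Gamma (1 / 2 - ζ / 2))) :=
  fun ζ hζ => mellin_of_cosine_transform_general (by norm_num [hζ]) (by norm_num [hζ]) hx1 <|
    integrableOn_Ioi_cpow_mul (by norm_num [hζ]) (by norm_num [hζ]) hx1
      (hxc.mono Icc_subset_Ici_self)
end

section
/- Let x : [0,∞) → ℂ be such that x is integrable and square integrable on (0,∞), its cosine Fourier transform x̂_c(t) = √(2/π)·∫₀^∞ x(s)·cos(ts) ds is integrable on (0,∞), and both x and x̂_c are continuous on [0,∞) and tend to 0 at +∞. Then x = x̂_c (i.e., the even extension of x to ℝ is an eigenfunction of the Fourier operator with eigenvalue 1) if and only if the Mellin transform φ_x(ζ) = ∫₀^∞ t^{ζ−1} x(t) dt satisfies the functional equation φ_x(1/2 + iη) = φ_x(1/2 − iη) · 2^{iη} · Γ(1/4 + iη/2)/Γ(1/4 − iη/2) for all η ∈ ℝ; equivalently, if and only if the function ψ(iη) = φ_x(1/2 + iη) · 2^{−iη/2} / Γ(1/4 + iη/2) is even in η. -/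
open MeasureTheory

/-- The Mellin transform `φ_x(ζ) = ∫₀^∞ t^{ζ−1} x(t) dt`. -/
noncomputable def mellin' (x : ℝ → ℂ) (ζ : ℂ) : ℂ :=
  ∫ t in Set.Ioi (0:ℝ), (t : ℂ) ^ (ζ - 1) * x t

/-! The Gaussian `exp(-t²/2)` is its own cosine transform. Parseval's identity for the cosine
transform turns `∫ k(at) x̂_c(t) dt` into `a⁻¹ ∫ k̂_c(t/a) x(t) dt`; taking for `k` the Gaussian and
Mellin transforms in `a` gives Tate's local functional equation `φ_{x̂_c}(s) = γ(s) φ_x(1 - s)`,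
which is the asserted one when `x = x̂_c`.

Conversely, the Mellin integral of `x̂_c` is not available in general, so `x̂_c` is tested against
the smooth functions `k` with compact support in `(0, ∞)`. The functional equations of `x` and of
`k` show that `∫ k(at) x(t) dt` and `∫ k(at) x̂_c(t) dt` have the same Mellin transform in `a` on
`re s = 1/2`. By Mellin inversion they agree at `a = 1`, so `x` and `x̂_c` have the same integral
against every such `k`, and hence coincide. -/

open Asymptotics Complex Filter Set
open scoped ContDiff FourierTransform Topology

section Mellin

variable {E : Type*} [NormedAddCommGroup E] [NormedSpace ℂ E] {f g : ℝ → E} {s : ℂ}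

lemma mellinConvergent_iff_of_re_eq {s' : ℂ} (hf : AEStronglyMeasurable f (volume.restrict (Ioi 0)))
    (hs : s.re = s'.re) : MellinConvergent f s ↔ MellinConvergent f s' := by
  simp only [MellinConvergent, mellin_convergent_iff_norm Subset.rfl measurableSet_Ioi hf, hs]

lemma hasMellin_congr_ae {m : E} (hfg : f =ᵐ[volume.restrict (Ioi 0)] g) :
    HasMellin f s m ↔ HasMellin g s m := by
  have hsmul : (fun t : ℝ => (t : ℂ) ^ (s - 1) • f t) =ᵐ[volume.restrict (Ioi 0)]
      fun t => (t : ℂ) ^ (s - 1) • g t := hfg.mono fun t ht => by simp only [ht]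
  rw [HasMellin, HasMellin, MellinConvergent, MellinConvergent, mellin, mellin, IntegrableOn,
    IntegrableOn, integrable_congr hsmul, integral_congr_ae hsmul]

lemma mellinConvergent_of_integrableOn (hf : IntegrableOn f (Ioi 0))
    (hf0 : f =O[𝓝[>] 0] (1 : ℝ → ℝ)) (hs0 : 0 < s.re) (hs1 : s.re ≤ 1) : MellinConvergent f s := by
  have hm := hf.aestronglyMeasurable
  obtain ⟨c, hc, hint⟩ := mellin_convergent_zero_of_isBigO hm.norm
    (b := 0) (hf0.norm_left.congr_right fun t => by simp) hs0
  rw [MellinConvergent, mellin_convergent_iff_norm Subset.rfl measurableSet_Ioi hm,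
    ← Ioc_union_Ioi_eq_Ioi hc.le]
  refine hint.union ?_
  refine Integrable.mono' ((hf.mono_set (Ioi_subset_Ioi hc.le)).norm.const_mul (c ^ (s.re - 1)))
    ?_ ?_
  · refine AEStronglyMeasurable.mul (Measurable.aestronglyMeasurable (by fun_prop)) ?_
    exact (hm.mono_set (Ioi_subset_Ioi hc.le)).norm
  · filter_upwards [ae_restrict_mem measurableSet_Ioi] with t (ht : c < t)
    rw [norm_mul, norm_norm, Real.norm_of_nonneg (Real.rpow_nonneg (hc.trans ht).le _)]
    exact mul_le_mul_of_nonneg_right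
      (Real.rpow_le_rpow_of_nonpos hc ht.le (by linarith)) (norm_nonneg _)

lemma hasMellin_inv_smul_comp_inv {m : E} (hf : HasMellin f (1 - s) m) :
    HasMellin (fun t => (t⁻¹ : ℂ) • f t⁻¹) s m := by
  have hexp : (s + -1) / ((-1 : ℝ) : ℂ) = 1 - s := by push_cast; ring
  simp only [← cpow_neg_one, ← Real.rpow_neg_one, HasMellin, MellinConvergent.cpow_smul,
    mellin_cpow_smul, MellinConvergent.comp_rpow (by norm_num : (-1 : ℝ) ≠ 0), mellin_comp_rpow,
    hexp, abs_neg, abs_one, Real.one_rpow, one_smul]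
  exact hf

lemma eq_of_hasMellin [CompleteSpace E] {σ t : ℝ} {m : ℝ → E} (ht : 0 < t)
    (hft : ContinuousAt f t) (hgt : ContinuousAt g t)
    (hf : ∀ η : ℝ, HasMellin f (σ + η * I) (m η)) (hg : ∀ η : ℝ, HasMellin g (σ + η * I) (m η)) :
    f t = g t := by
  have hzero : ∀ η : ℝ, HasMellin (fun t => f t - g t) (σ + η * I) 0 := fun η => by
    simpa only [(hf η).2, (hg η).2, sub_self] using hasMellin_sub (hf η).1 (hg η).1
  have hinv := mellinInv_mellin_eq σ (fun t => f t - g t) ht (by simpa using (hzero 0).1)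
    (by simp only [VerticalIntegrable, (hzero _).2]; exact integrable_zero _ _ _) (hft.sub hgt)
  simp only [mellinInv, (hzero _).2, smul_zero, integral_zero] at hinv
  exact sub_eq_zero.mp hinv.symm

/-- The multiplicative convolution `a ↦ ∫₀^∞ k(at) f(t) dt`, without the factor `t⁻¹` of Haar
measure: at `a = 1` it is the pairing of `k` with `f`. The Mellin transform takes it to
`k̃(s) f̃(1 - s)`. -/
noncomputable def mellinConv (k : ℝ → ℂ) (f : ℝ → E) (a : ℝ) : E :=
  ∫ t in Ioi (0 : ℝ), k (a * t) • f t

lemma integrable_prod_smul_comp_mul {h : ℝ → ℂ} {φ : ℝ → E} (hm : Measurable h)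
    (hh : IntegrableOn h (Ioi 0)) (hφ : IntegrableOn φ (Ioi 0)) :
    Integrable (fun p : ℝ × ℝ => ((p.1 : ℂ) * h (p.2 * p.1)) • φ p.1)
      ((volume.restrict (Ioi 0)).prod (volume.restrict (Ioi 0))) := by
  have hmeas : AEStronglyMeasurable (fun p : ℝ × ℝ => ((p.1 : ℂ) * h (p.2 * p.1)) • φ p.1)
      ((volume.restrict (Ioi 0)).prod (volume.restrict (Ioi 0))) :=
    (Measurable.aestronglyMeasurable (by fun_prop)).smul hφ.aestronglyMeasurable.comp_fst
  rw [integrable_prod_iff hmeas]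
  constructor
  · filter_upwards [ae_restrict_mem measurableSet_Ioi] with t (ht : 0 < t)
    have hcomp : IntegrableOn (fun a => h (a * t)) (Ioi 0) := by
      simpa only [mul_comm, mul_zero] using (integrableOn_Ioi_comp_mul_left_iff h 0 ht).2 (by simpa)
    exact (hcomp.const_mul _).smul_const _
  · refine (hφ.norm.const_mul (∫ u in Ioi (0 : ℝ), ‖h u‖)).congr ?_
    filter_upwards [ae_restrict_mem measurableSet_Ioi] with t (ht : 0 < t)
    have hscale := integral_comp_mul_right_Ioi (fun u => ‖h u‖) 0 ht
    rw [zero_mul, smul_eq_mul] at hscale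
    simp only [norm_smul, norm_mul, norm_real, Real.norm_of_nonneg ht.le]
    rw [integral_mul_const, integral_const_mul, hscale, mul_inv_cancel_left₀ ht.ne']

lemma hasMellin_mellinConv [CompleteSpace E] {k : ℝ → ℂ} (hkm : Measurable k)
    (hk : MellinConvergent k s) (hf : MellinConvergent f (1 - s)) :
    HasMellin (mellinConv k f) s (mellin k s • mellin f (1 - s)) := by
  let F : ℝ × ℝ → E := fun p => (p.2 : ℂ) ^ (s - 1) • k (p.2 * p.1) • f p.1
  have hF : Integrable F ((volume.restrict (Ioi 0)).prod (volume.restrict (Ioi 0))) := by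
    refine (integrable_prod_smul_comp_mul (by fun_prop) hk hf).congr ?_
    rw [Measure.prod_restrict]
    filter_upwards [ae_restrict_mem (measurableSet_Ioi.prod measurableSet_Ioi)]
      with ⟨t, a⟩ ⟨(ht : 0 < t), (ha : 0 < a)⟩
    have ht' : (t : ℂ) ≠ 0 := ofReal_ne_zero.2 ht.ne'
    have hpow : (t : ℂ) * ((t : ℂ) ^ (s - 1) * (t : ℂ) ^ (1 - s - 1)) = 1 := by
      rw [← cpow_add _ _ ht', show s - 1 + (1 - s - 1) = -1 by ring, cpow_neg_one,
        mul_inv_cancel₀ ht']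
    simp only [F, ofReal_mul, mul_cpow_ofReal_nonneg ha.le ht.le, smul_smul, smul_eq_mul]
    congr 1
    linear_combination ((a : ℂ) ^ (s - 1) * k (a * t)) * hpow
  have hinner : ∀ a, ∫ t in Ioi (0 : ℝ), F (t, a) = (a : ℂ) ^ (s - 1) • mellinConv k f a :=
    fun a => integral_smul ((a : ℂ) ^ (s - 1)) fun t => k (a * t) • f t
  refine ⟨hF.integral_prod_right.congr (.of_forall hinner), ?_⟩
  calc mellin (mellinConv k f) s
      = ∫ a in Ioi (0 : ℝ), ∫ t in Ioi (0 : ℝ), F (t, a) := by simp only [mellin, hinner]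
    _ = ∫ t in Ioi (0 : ℝ), ∫ a in Ioi (0 : ℝ), F (t, a) := integral_integral_swap hF.swap
    _ = ∫ t in Ioi (0 : ℝ), mellin k s • (t : ℂ) ^ (1 - s - 1) • f t := by
        refine setIntegral_congr_fun measurableSet_Ioi fun t (ht : 0 < t) => ?_
        simp only [F, ← smul_assoc]
        rw [integral_smul_const, smul_eq_mul, show 1 - s - 1 = -s by ring, mul_comm,
          ← smul_eq_mul, ← mellin_comp_mul_right _ _ ht, mellin]
    _ = mellin k s • mellin f (1 - s) := integral_smul _ _

lemma continuous_mellinConv {k : ℝ → ℂ} {C : ℝ} (hk : Continuous k) (hC : ∀ t, ‖k t‖ ≤ C)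
    (hf : IntegrableOn f (Ioi 0)) : Continuous (mellinConv k f) := by
  refine continuous_of_dominated (bound := fun t => C * ‖f t‖) (fun a => ?_) (fun a => ?_)
    (hf.norm.const_mul C) (.of_forall fun t => by fun_prop)
  · exact Continuous.aestronglyMeasurable (by fun_prop) |>.smul hf.aestronglyMeasurable
  · refine .of_forall fun t => ?_
    rw [norm_smul]
    exact mul_le_mul_of_nonneg_right (hC _) (norm_nonneg _)

end Mellin

section CosineTransform

variable {f g k : ℝ → ℂ} {s : ℂ}

lemma norm_cosFT_le (hf : IntegrableOn f (Ioi 0)) (t : ℝ) :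
    ‖cosFT f t‖ ≤ √(2 / Real.pi) * ∫ s in Ioi (0 : ℝ), ‖f s‖ := by
  rw [cosFT, norm_mul, norm_real, Real.norm_of_nonneg (Real.sqrt_nonneg _)]
  refine mul_le_mul_of_nonneg_left
    (norm_integral_le_of_norm_le hf.norm (.of_forall fun s => ?_)) (Real.sqrt_nonneg _)
  rw [norm_mul, norm_real]
  exact mul_le_of_le_one_right (norm_nonneg _) (Real.abs_cos_le_one _)

lemma continuous_cosFT (hf : IntegrableOn f (Ioi 0)) : Continuous (cosFT f) := by
  refine continuous_const.mul (continuous_of_dominated (bound := fun s => ‖f s‖) (fun t => ?_)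
    (fun t => .of_forall fun s => ?_) hf.norm (.of_forall fun s => by fun_prop))
  · exact hf.aestronglyMeasurable.mul (Continuous.aestronglyMeasurable (by fun_prop))
  · rw [norm_mul, norm_real]
    exact mul_le_of_le_one_right (norm_nonneg _) (Real.abs_cos_le_one _)

lemma cosFT_congr_ae (hfg : f =ᵐ[volume.restrict (Ioi 0)] g) : cosFT f = cosFT g := by
  funext t
  exact congrArg _ (integral_congr_ae (hfg.mono fun s hs => congrArg (· * _) hs))

lemma mellinConvergent_cosFT (hf : IntegrableOn f (Ioi 0)) (hc : IntegrableOn (cosFT f) (Ioi 0))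
    (hs0 : 0 < s.re) (hs1 : s.re ≤ 1) : MellinConvergent (cosFT f) s :=
  mellinConvergent_of_integrableOn hc
    (.of_bound _ (.of_forall fun t => by simpa using norm_cosFT_le hf t)) hs0 hs1

lemma integral_cosFT_mul (hf : IntegrableOn f (Ioi 0)) (hg : IntegrableOn g (Ioi 0)) :
    ∫ t in Ioi (0 : ℝ), cosFT f t * g t = ∫ t in Ioi (0 : ℝ), f t * cosFT g t := by
  have hint : Integrable (fun p : ℝ × ℝ => f p.1 * g p.2 * (Real.cos (p.2 * p.1) : ℂ))
      ((volume.restrict (Ioi 0)).prod (volume.restrict (Ioi 0))) :=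
    (hf.mul_prod hg).mul_bdd (c := 1) (Continuous.aestronglyMeasurable (by fun_prop))
      (.of_forall fun p => (norm_real _).trans_le (Real.abs_cos_le_one _))
  calc ∫ t in Ioi (0 : ℝ), cosFT f t * g t
      = ∫ t in Ioi (0 : ℝ), √(2 / Real.pi) *
          ∫ s in Ioi (0 : ℝ), f s * g t * (Real.cos (t * s) : ℂ) := by
        refine integral_congr_ae (.of_forall fun t => ?_)
        simp only [cosFT, mul_assoc, ← integral_mul_const, mul_comm (g t)]
    _ = √(2 / Real.pi) * ∫ s in Ioi (0 : ℝ), ∫ t in Ioi (0 : ℝ),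
          f s * g t * (Real.cos (t * s) : ℂ) := by
        rw [integral_const_mul, integral_integral_swap
          (f := fun t s => f s * g t * (Real.cos (t * s) : ℂ)) hint.swap]
    _ = ∫ s in Ioi (0 : ℝ), f s * cosFT g s := by
        rw [← integral_const_mul]
        refine integral_congr_ae (.of_forall fun s => ?_)
        simp only [cosFT, mul_assoc, integral_const_mul, mul_comm s]
        ring

lemma cosFT_comp_mul_left (f : ℝ → ℂ) {a : ℝ} (ha : 0 < a) (t : ℝ) :
    cosFT (fun s => f (a * s)) t = (a⁻¹ : ℂ) * cosFT f (a⁻¹ * t) := by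
  have hscale := integral_comp_mul_left_Ioi
    (fun u => f u * (Real.cos (a⁻¹ * t * u) : ℂ)) 0 ha
  have harg : ∀ s, a⁻¹ * t * (a * s) = t * s := fun s => by field_simp
  simp only [mul_zero, harg, real_smul, ofReal_inv] at hscale
  rw [cosFT, cosFT, hscale]
  ring

lemma mellinConv_cosFT (hk : IntegrableOn k (Ioi 0)) (hf : IntegrableOn f (Ioi 0)) {a : ℝ}
    (ha : 0 < a) : mellinConv k (cosFT f) a = (a⁻¹ : ℂ) • mellinConv (cosFT k) f a⁻¹ := by
  have hka : IntegrableOn (fun t => k (a * t)) (Ioi 0) :=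
    (integrableOn_Ioi_comp_mul_left_iff k 0 ha).2 (by simpa)
  simp only [mellinConv, smul_eq_mul]
  rw [← integral_cosFT_mul hka hf, ← integral_const_mul]
  simp only [cosFT_comp_mul_left k ha, mul_assoc]

lemma hasMellin_mellinConv_cosFT (hk : IntegrableOn k (Ioi 0)) (hf : IntegrableOn f (Ioi 0))
    (hks : MellinConvergent (cosFT k) (1 - s)) (hfs : MellinConvergent f s) :
    HasMellin (mellinConv k (cosFT f)) s (mellin (cosFT k) (1 - s) * mellin f s) := by
  have hconv := hasMellin_mellinConv (s := 1 - s) (f := f) (continuous_cosFT hk).measurable hks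
    (by rwa [sub_sub_cancel])
  rw [sub_sub_cancel] at hconv
  refine (hasMellin_congr_ae ?_).1 (hasMellin_inv_smul_comp_inv hconv)
  filter_upwards [ae_restrict_mem measurableSet_Ioi] with a ha
  exact (mellinConv_cosFT hk hf ha).symm

lemma cosFT_add_comp_neg {h : ℝ → ℂ} (hh : Integrable h) (t : ℝ) :
    cosFT (fun s => h s + h (-s)) t =
      √(2 / Real.pi) / 2 * (𝓕 h (t / (2 * Real.pi)) + 𝓕 h (-(t / (2 * Real.pi)))) := by
  have hcos : Integrable fun s => h s * (Real.cos (t * s) : ℂ) :=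
    hh.mul_bdd (c := 1) (Continuous.aestronglyMeasurable (by fun_prop))
      (.of_forall fun s => (norm_real _).trans_le (Real.abs_cos_le_one _))
  have hexp : ∀ w : ℝ, Integrable fun s : ℝ => cexp ((-2 * Real.pi * s * w : ℝ) * I) • h s :=
    fun w => hh.bdd_mul (c := 1) (Continuous.aestronglyMeasurable (by fun_prop))
      (.of_forall fun s => (norm_exp_ofReal_mul_I _).le)
  have hfold : ∫ s in Ioi (0 : ℝ), (h s + h (-s)) * (Real.cos (t * s) : ℂ) =
      ∫ s, h s * (Real.cos (t * s) : ℂ) := by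
    rw [← intervalIntegral.integral_Iic_add_Ioi (b := 0) hcos.integrableOn hcos.integrableOn,
      ← neg_zero, ← integral_comp_neg_Ioi, neg_zero, add_comm, ← integral_add hcos.integrableOn
        hcos.comp_neg.integrableOn]
    simp only [add_mul, mul_neg, Real.cos_neg]
  have heuler : ∫ s, h s * (Real.cos (t * s) : ℂ) =
      (𝓕 h (t / (2 * Real.pi)) + 𝓕 h (-(t / (2 * Real.pi)))) / 2 := by
    rw [Real.fourier_real_eq_integral_exp_smul, Real.fourier_real_eq_integral_exp_smul,
      ← integral_add (hexp _) (hexp _), ← integral_div]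
    refine integral_congr_ae (.of_forall fun s => ?_)
    have harg : -2 * Real.pi * s * (t / (2 * Real.pi)) = -(t * s) := by field_simp
    simp only [mul_neg, harg, neg_neg, ofReal_cos, Complex.cos, smul_eq_mul, ofReal_neg]
    ring
  rw [cosFT, hfold, heuler]
  ring

/-- The Gaussian `t ↦ exp(-t²/2)`, normalized so as to be its own cosine transform. -/
noncomputable def unitGaussian (t : ℝ) : ℂ :=
  cexp (-((1 / 2 : ℝ) : ℂ) * (t : ℂ) ^ 2)

lemma integrable_unitGaussian : Integrable unitGaussian :=
  integrable_cexp_neg_mul_sq (by simp)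

lemma fourier_unitGaussian (t : ℝ) :
    𝓕 unitGaussian (t / (2 * Real.pi)) = √(2 * Real.pi) * unitGaussian t := by
  have hinv : (2 * Real.pi : ℂ)⁻¹ = ((2 * Real.pi)⁻¹ : ℝ) := by push_cast; rfl
  have hre : 0 < ((2 * Real.pi : ℂ)⁻¹).re := by
    rw [hinv, ofReal_re]
    positivity
  have hpi : (Real.pi : ℂ) ≠ 0 := ofReal_ne_zero.2 Real.pi_ne_zero
  have hG : unitGaussian = fun x : ℝ => cexp (-Real.pi * (2 * Real.pi : ℂ)⁻¹ * x ^ 2) := by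
    funext x
    rw [unitGaussian]
    congr 2
    push_cast
    field_simp
  have hsqrt : 1 / ((2 * Real.pi : ℂ)⁻¹) ^ (1 / 2 : ℂ) = √(2 * Real.pi) := by
    rw [hinv, Real.sqrt_eq_rpow, show (1 / 2 : ℂ) = (1 / 2 : ℝ) by push_cast; rfl,
      ← ofReal_cpow (by positivity), Real.inv_rpow (by positivity), ofReal_inv, one_div, inv_inv]
  rw [hG, congrFun (fourier_gaussian_pi hre), hsqrt]
  congr 2
  push_cast
  field_simp

lemma cosFT_unitGaussian : cosFT unitGaussian = unitGaussian := by
  funext t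
  have hneg : ∀ s, unitGaussian (-s) = unitGaussian s := fun s => by simp [unitGaussian]
  have hhalf : unitGaussian = fun s => unitGaussian s / 2 + unitGaussian (-s) / 2 := by
    funext s
    rw [hneg, add_halves]
  have hfourier : ∀ w, 𝓕 (fun s => unitGaussian s / 2) w = 𝓕 unitGaussian w / 2 := fun w => by
    simp only [Real.fourier_real_eq_integral_exp_smul, smul_eq_mul, ← mul_div_assoc, integral_div]
  have hconst : (√(2 / Real.pi) : ℂ) * √(2 * Real.pi) = 2 := by
    rw [← ofReal_mul, ← Real.sqrt_mul (by positivity),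
      show 2 / Real.pi * (2 * Real.pi) = 2 ^ 2 by field_simp, Real.sqrt_sq zero_le_two]
    norm_num
  conv_lhs => rw [hhalf]
  rw [cosFT_add_comp_neg (integrable_unitGaussian.div_const 2), hfourier, hfourier, ← neg_div,
    fourier_unitGaussian, fourier_unitGaussian, hneg]
  linear_combination unitGaussian t / 2 * hconst

lemma hasMellin_unitGaussian (hs : 0 < s.re) :
    HasMellin unitGaussian s (2 ^ (s / 2 - 1) * Gamma (s / 2)) := by
  have hre : 0 < (s / 2).re := by simpa using hs
  have hG : unitGaussian = fun t : ℝ => (Real.exp (-(1 / 2 * t ^ (2 : ℝ))) : ℂ) := by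
    funext t
    simp [unitGaussian]
  have hconv : MellinConvergent (fun u : ℝ => (Real.exp (-u) : ℂ)) (s / 2) := by
    simpa only [MellinConvergent, smul_eq_mul, mul_comm] using GammaIntegral_convergent hre
  have hGamma : mellin (fun u : ℝ => (Real.exp (-u) : ℂ)) (s / 2) = Gamma (s / 2) := by
    rw [← GammaIntegral_eq_mellin, Gamma_eq_integral hre]
  have hpow : ((1 / 2 : ℝ) : ℂ) ^ (-(s / 2)) = 2 ^ (s / 2) := by
    rw [one_div, ofReal_inv, ofReal_ofNat, inv_cpow _ _ (by simp [Real.pi_pos.ne]), cpow_neg,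
      inv_inv]
  rw [hG]
  constructor
  · refine (MellinConvergent.comp_rpow (f := fun u : ℝ => (Real.exp (-(1 / 2 * u)) : ℂ))
      two_ne_zero).2 ?_
    exact (MellinConvergent.comp_mul_left (f := fun u : ℝ => (Real.exp (-u) : ℂ))
      one_half_pos).2 (by simpa using hconv)
  · rw [mellin_comp_rpow (fun u : ℝ => (Real.exp (-(1 / 2 * u)) : ℂ)), ofReal_ofNat,
      mellin_comp_mul_left (fun u : ℝ => (Real.exp (-u) : ℂ)) _ one_half_pos, hGamma, hpow,
      cpow_sub _ _ two_ne_zero, cpow_one]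
    simp only [real_smul, smul_eq_mul, abs_two, ofReal_inv, ofReal_ofNat]
    ring

/-- The factor `γ(s) = 2^{s-1/2} Γ(s/2) / Γ((1-s)/2)` of the functional equation
`f̃(s) = γ(s) f̃(1-s)`, the quotient of the Mellin transforms of the Gaussian at `s` and `1 - s`. -/
noncomputable def cosGammaFactor (s : ℂ) : ℂ :=
  2 ^ (s - 1 / 2) * Gamma (s / 2) / Gamma ((1 - s) / 2)

lemma mellin_cosFT (hf : IntegrableOn f (Ioi 0)) (hs0 : 0 < s.re) (hs1 : s.re < 1)
    (hfs : MellinConvergent f (1 - s)) (hcs : MellinConvergent (cosFT f) s) :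
    mellin (cosFT f) s = cosGammaFactor s * mellin f (1 - s) := by
  have hG := hasMellin_unitGaussian hs0
  have hG' := hasMellin_unitGaussian (s := 1 - s) (by simpa using hs1)
  have hconv := hasMellin_mellinConv (f := cosFT f) (s := 1 - s)
    (by unfold unitGaussian; fun_prop) hG'.1 (by rwa [sub_sub_cancel])
  have hconv' := hasMellin_mellinConv_cosFT (k := unitGaussian) (s := 1 - s)
    integrable_unitGaussian.integrableOn hf (by simpa [cosFT_unitGaussian] using hG.1) hfs
  have hmul : 2 ^ ((1 - s) / 2 - 1) * Gamma ((1 - s) / 2) * mellin (cosFT f) s =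
      2 ^ (s / 2 - 1) * Gamma (s / 2) * mellin f (1 - s) := by
    simpa only [cosFT_unitGaussian, sub_sub_cancel, hG.2, hG'.2, smul_eq_mul] using
      hconv.2.symm.trans hconv'.2
  have hGamma : Gamma ((1 - s) / 2) ≠ 0 := Gamma_ne_zero_of_re_pos (by simpa using hs1)
  have hpow : (2 : ℂ) ^ ((1 - s) / 2 - 1) ≠ 0 := by simp [cpow_eq_zero_iff]
  have hsplit : (2 : ℂ) ^ (s / 2 - 1) = 2 ^ ((1 - s) / 2 - 1) * 2 ^ (s - 1 / 2) := by
    rw [← cpow_add _ _ two_ne_zero]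
    ring_nf
  refine mul_left_cancel₀ (mul_ne_zero hpow hGamma) ?_
  rw [hmul, hsplit, cosGammaFactor]
  field_simp

lemma integrable_cosFT_of_integrable_fourier {h : ℝ → ℂ} (hh : Integrable h)
    (hF : Integrable (𝓕 h)) (h0 : ∀ s < 0, h s = 0) : Integrable (cosFT h) := by
  have hfold : cosFT h = cosFT fun s => h s + h (-s) := by
    refine cosFT_congr_ae ?_
    filter_upwards [ae_restrict_mem measurableSet_Ioi] with s (hs : 0 < s)
    rw [h0 (-s) (neg_lt_zero.2 hs), add_zero]
  have hscale : Integrable fun t => 𝓕 h (t / (2 * Real.pi)) := hF.comp_div (by positivity)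
  rw [hfold, funext (cosFT_add_comp_neg hh)]
  refine (hscale.add ?_).const_mul _
  simpa only [neg_div] using hscale.comp_neg

lemma continuousAt_mellinConv_cosFT (hk : IntegrableOn k (Ioi 0)) (hf : IntegrableOn f (Ioi 0))
    {a : ℝ} (ha : 0 < a) : ContinuousAt (mellinConv k (cosFT f)) a := by
  have hcont := continuous_mellinConv (continuous_cosFT hk) (norm_cosFT_le hk) hf
  have hrefl : ContinuousAt (fun a : ℝ => (a⁻¹ : ℂ) • mellinConv (cosFT k) f a⁻¹) a :=
    (continuous_ofReal.continuousAt.inv₀ (ofReal_ne_zero.2 ha.ne')).smul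
      (hcont.continuousAt.comp (continuousAt_inv₀ ha.ne'))
  refine hrefl.congr ?_
  filter_upwards [Ioi_mem_nhds ha] with b hb
  exact (mellinConv_cosFT hk hf hb).symm

/-- The functional equation `f̃(s) = γ(s) f̃(1 - s)` on the critical line `re s = 1/2`. -/
def MellinFunctionalEquation (f : ℝ → ℂ) : Prop :=
  ∀ s : ℂ, s.re = 1 / 2 → mellin f s = cosGammaFactor s * mellin f (1 - s)

lemma MellinFunctionalEquation.mellinConv_cosFT_eq (hfe : MellinFunctionalEquation f)
    (hf : IntegrableOn f (Ioi 0)) (hfm : MellinConvergent f (1 / 2)) {C : ℝ} (hkc : Continuous k)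
    (hkb : ∀ t, ‖k t‖ ≤ C) (hk : IntegrableOn k (Ioi 0)) (hck : IntegrableOn (cosFT k) (Ioi 0))
    {a : ℝ} (ha : 0 < a) : mellinConv k (cosFT f) a = mellinConv k f a := by
  have hmellin : ∀ s : ℂ, s.re = 1 / 2 →
      HasMellin (mellinConv k (cosFT f)) s (mellin k s * mellin f (1 - s)) ∧
        HasMellin (mellinConv k f) s (mellin k s * mellin f (1 - s)) := by
    intro s hs
    have hs' : (1 - s).re = 1 / 2 := by rw [sub_re, one_re, hs]; norm_num
    have hline : ∀ z : ℂ, z.re = 1 / 2 → MellinConvergent f z := fun z hz =>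
      (mellinConvergent_iff_of_re_eq hf.aestronglyMeasurable (by simp [hz])).1 hfm
    have hks : MellinConvergent k s := mellinConvergent_of_integrableOn hk
      (.of_bound C (.of_forall fun t => by simpa using hkb t)) (by simp [hs])
      (by rw [hs]; norm_num)
    have hcks : MellinConvergent (cosFT k) (1 - s) :=
      mellinConvergent_cosFT hk hck (by simp [hs']) (by rw [hs']; norm_num)
    have hkfe : mellin (cosFT k) (1 - s) = cosGammaFactor (1 - s) * mellin k s := by
      simpa using mellin_cosFT hk (s := 1 - s) (by simp [hs']) (by rw [hs']; norm_num)
        (by simpa using hks) hcks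
    have hvalue : mellin (cosFT k) (1 - s) * mellin f s = mellin k s * mellin f (1 - s) := by
      rw [hkfe, hfe _ hs', sub_sub_cancel]
      ring
    exact ⟨hvalue ▸ hasMellin_mellinConv_cosFT hk hf hcks (hline _ hs),
      hasMellin_mellinConv hkc.measurable hks (hline _ hs')⟩
  exact eq_of_hasMellin (σ := 1 / 2) ha (continuousAt_mellinConv_cosFT hk hf ha)
    (continuous_mellinConv hkc hkb hf).continuousAt
    (fun η => (hmellin _ (by simp)).1) fun η => (hmellin _ (by simp)).2

lemma MellinFunctionalEquation.integral_mul_cosFT_eq (hfe : MellinFunctionalEquation f)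
    (hf : IntegrableOn f (Ioi 0)) (hfm : MellinConvergent f (1 / 2)) (hk : ContDiff ℝ ∞ k)
    (hkc : HasCompactSupport k) (hk0 : ∀ t < 0, k t = 0) :
    ∫ t in Ioi (0 : ℝ), k t * cosFT f t = ∫ t in Ioi (0 : ℝ), k t * f t := by
  obtain ⟨C, hC⟩ := hk.continuous.bounded_above_of_compact_support hkc
  have hki : Integrable k := hk.continuous.integrable_of_hasCompactSupport hkc
  have hkF : Integrable (𝓕 k) := (𝓕 (hkc.toSchwartzMap hk)).integrable
  have hck : Integrable (cosFT k) := integrable_cosFT_of_integrable_fourier hki hkF hk0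
  simpa only [mellinConv, one_mul, smul_eq_mul] using hfe.mellinConv_cosFT_eq hf hfm
    hk.continuous hC hki.integrableOn hck.integrableOn one_pos

lemma MellinFunctionalEquation.ae_eq_cosFT (hfe : MellinFunctionalEquation f)
    (hf : IntegrableOn f (Ioi 0)) (hfm : MellinConvergent f (1 / 2)) :
    f =ᵐ[volume.restrict (Ioi 0)] cosFT f := by
  have hcf : LocallyIntegrableOn (cosFT f) (Ioi 0) :=
    (continuous_cosFT hf).locallyIntegrable.locallyIntegrableOn _
  have hzero : ∀ᵐ t, t ∈ Ioi (0 : ℝ) → cosFT f t - f t = 0 := by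
    refine isOpen_Ioi.ae_eq_zero_of_integral_contDiff_smul_eq_zero
      (hcf.sub hf.locallyIntegrableOn) fun k hk hkc hksupp => ?_
    have hk0 : ∀ t ∉ Ioi (0 : ℝ), k t = 0 := fun t ht =>
      image_eq_zero_of_notMem_tsupport fun h => ht (hksupp h)
    have hφ : ContDiff ℝ ∞ fun t => (k t : ℂ) := ofRealCLM.contDiff.comp hk
    have hφc : HasCompactSupport fun t => (k t : ℂ) := hkc.comp_left ofReal_zero
    have hpair := hfe.integral_mul_cosFT_eq hf hfm hφ hφc fun t ht => by simp [hk0 t ht.not_gt]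
    obtain ⟨C, hC⟩ := hφ.continuous.bounded_above_of_compact_support hφc
    have hint : IntegrableOn (fun t => (k t : ℂ) * f t) (Ioi 0) :=
      hf.bdd_mul hφ.continuous.aestronglyMeasurable (.of_forall hC)
    have hcint : IntegrableOn (fun t => (k t : ℂ) * cosFT f t) (Ioi 0) :=
      ((hφ.continuous.integrable_of_hasCompactSupport hφc).mul_bdd
        (continuous_cosFT hf).aestronglyMeasurable (.of_forall (norm_cosFT_le hf))).integrableOn
    rw [← setIntegral_eq_integral_of_forall_compl_eq_zero (s := Ioi 0) fun t ht => by
      rw [hk0 t ht, zero_smul]]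
    simp only [real_smul, mul_sub]
    rw [integral_sub hcint hint, hpair, sub_self]
  rw [Filter.EventuallyEq, ae_restrict_iff' measurableSet_Ioi]
  exact hzero.mono fun t h ht => (sub_eq_zero.1 (h ht)).symm

lemma mellinFunctionalEquation_of_ae_eq_cosFT (hf : IntegrableOn f (Ioi 0))
    (hfm : MellinConvergent f (1 / 2)) (hfix : f =ᵐ[volume.restrict (Ioi 0)] cosFT f) :
    MellinFunctionalEquation f := by
  intro s hs
  have hline : ∀ z : ℂ, z.re = 1 / 2 → MellinConvergent f z := fun z hz =>
    (mellinConvergent_iff_of_re_eq hf.aestronglyMeasurable (by simp [hz])).1 hfm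
  have hcs := (hasMellin_congr_ae hfix).1 ⟨hline s hs, rfl⟩
  rw [← hcs.2]
  exact mellin_cosFT hf (by simp [hs]) (by rw [hs]; norm_num)
    (hline _ (by rw [sub_re, one_re, hs]; norm_num)) hcs.1

end CosineTransform

lemma cosGammaFactor_half_add (z : ℂ) :
    cosGammaFactor (1 / 2 + z) = 2 ^ z * Gamma (1 / 4 + z / 2) / Gamma (1 / 4 - z / 2) := by
  rw [cosGammaFactor]
  ring_nf

lemma mellinFunctionalEquation_iff {x : ℝ → ℂ} :
    MellinFunctionalEquation x ↔
      ∀ η : ℝ, mellin' x (1 / 2 + (η : ℂ) * Complex.I) =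
        mellin' x (1 / 2 - (η : ℂ) * Complex.I) * (2 : ℂ) ^ ((η : ℂ) * Complex.I) *
          Complex.Gamma (1 / 4 + (η : ℂ) * Complex.I / 2) /
            Complex.Gamma (1 / 4 - (η : ℂ) * Complex.I / 2) := by
  have hparam : ∀ η : ℝ, cosGammaFactor (1 / 2 + η * I) * mellin x (1 - (1 / 2 + η * I)) =
      mellin x (1 / 2 - η * I) * 2 ^ (η * I) * Gamma (1 / 4 + η * I / 2) /
        Gamma (1 / 4 - η * I / 2) := fun η => by
    rw [cosGammaFactor_half_add, show (1 : ℂ) - (1 / 2 + η * I) = 1 / 2 - η * I by ring]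
    ring
  refine ⟨fun h η => (h _ (by simp)).trans (hparam η), fun h s hs => ?_⟩
  have hs' : s = 1 / 2 + s.im * I := by
    conv_lhs => rw [← re_add_im s, hs]
    push_cast
    rfl
  rw [hs']
  exact (h s.im).trans (hparam s.im).symm

lemma eq_mul_two_cpow_mul_div_iff {A B G H z : ℂ} (hG : G ≠ 0) (hH : H ≠ 0) :
    A = B * 2 ^ z * G / H ↔ A * 2 ^ (-z / 2) / G = B * 2 ^ (z / 2) / H := by
  have hpow : (2 : ℂ) ^ (z / 2) ≠ 0 := by simp [cpow_eq_zero_iff]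
  have hz : (2 : ℂ) ^ z = 2 ^ (z / 2) * 2 ^ (z / 2) := by
    rw [← cpow_add _ _ two_ne_zero, add_halves]
  rw [hz, neg_div, cpow_neg]
  field_simp

lemma eqOn_cosFT_iff_mellinFunctionalEquation {x : ℝ → ℂ} (hx : IntegrableOn x (Ioi 0))
    (hxc : ContinuousOn x (Ici 0)) :
    (∀ t : ℝ, 0 ≤ t → x t = cosFT x t) ↔ MellinFunctionalEquation x := by
  have hx0 : x =O[𝓝[>] 0] (1 : ℝ → ℝ) :=
    ((hxc 0 self_mem_Ici).mono Ioi_subset_Ici_self).isBigO_one ℝ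
  have hxm : MellinConvergent x (1 / 2) :=
    mellinConvergent_of_integrableOn hx hx0 (by simp) (by norm_num)
  refine ⟨fun h => mellinFunctionalEquation_of_ae_eq_cosFT hx hxm ?_, fun h => ?_⟩
  · filter_upwards [ae_restrict_mem measurableSet_Ioi] with t (ht : 0 < t) using h t ht.le
  · have hae := h.ae_eq_cosFT hx hxm
    rw [restrict_Ioi_eq_restrict_Ici] at hae
    exact fun t ht => Measure.eqOn_of_ae_eq hae hxc (continuous_cosFT hx).continuousOn
      (by simp) ht

theorem eigenfunction_iff_mellin_functional_equation_general (x : ℝ → ℂ)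
    (hx : IntegrableOn x (Ioi 0)) (hxc : ContinuousOn x (Ici 0)) :
    ((∀ t : ℝ, 0 ≤ t → x t = cosFT x t) ↔
      (∀ η : ℝ, mellin' x (1 / 2 + (η : ℂ) * Complex.I) =
        mellin' x (1 / 2 - (η : ℂ) * Complex.I) * (2 : ℂ) ^ ((η : ℂ) * Complex.I) *
          Complex.Gamma (1 / 4 + (η : ℂ) * Complex.I / 2) /
            Complex.Gamma (1 / 4 - (η : ℂ) * Complex.I / 2))) ∧
    ((∀ t : ℝ, 0 ≤ t → x t = cosFT x t) ↔
      (∀ η : ℝ, mellin' x (1 / 2 + (η : ℂ) * Complex.I) *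
          (2 : ℂ) ^ (-((η : ℂ) * Complex.I) / 2) /
            Complex.Gamma (1 / 4 + (η : ℂ) * Complex.I / 2) =
        mellin' x (1 / 2 - (η : ℂ) * Complex.I) *
          (2 : ℂ) ^ ((η : ℂ) * Complex.I / 2) /
            Complex.Gamma (1 / 4 - (η : ℂ) * Complex.I / 2))) := by
  have hfe := (eqOn_cosFT_iff_mellinFunctionalEquation hx hxc).trans mellinFunctionalEquation_iff
  exact ⟨hfe, hfe.trans (forall_congr' fun η => eq_mul_two_cpow_mul_div_iff
    (Gamma_ne_zero_of_re_pos (by simp)) (Gamma_ne_zero_of_re_pos (by simp)))⟩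

/-- For a "c-good" function `x`, one has `x = x̂_c` on `[0,∞)` (i.e. the even extension of
`x` is an eigenfunction of the Fourier operator with eigenvalue `1`) if and only if its
Mellin transform satisfies the functional equation
`φ_x(1/2+iη) = φ_x(1/2−iη)·2^{iη}·Γ(1/4+iη/2)/Γ(1/4−iη/2)` for all real `η`;
equivalently, iff `ψ(iη) = φ_x(1/2+iη)·2^{−iη/2}/Γ(1/4+iη/2)` is an even function of `η`. -/
theorem eigenfunction_iff_mellin_functional_equation (x : ℝ → ℂ)
    (hx1 : IntegrableOn x (Set.Ioi 0) volume)
    (hx2 : IntegrableOn (fun t => ‖x t‖ ^ 2) (Set.Ioi 0) volume)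
    (hc1 : IntegrableOn (cosFT x) (Set.Ioi 0) volume)
    (hxc : ContinuousOn x (Set.Ici 0))
    (hcc : ContinuousOn (cosFT x) (Set.Ici 0))
    (hx0 : Filter.Tendsto x Filter.atTop (nhds 0))
    (hc0 : Filter.Tendsto (cosFT x) Filter.atTop (nhds 0)) :
    ((∀ t : ℝ, 0 ≤ t → x t = cosFT x t) ↔
      (∀ η : ℝ, mellin' x (1 / 2 + (η : ℂ) * Complex.I) =
        mellin' x (1 / 2 - (η : ℂ) * Complex.I) * (2 : ℂ) ^ ((η : ℂ) * Complex.I) *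
          Complex.Gamma (1 / 4 + (η : ℂ) * Complex.I / 2) /
            Complex.Gamma (1 / 4 - (η : ℂ) * Complex.I / 2))) ∧
    ((∀ t : ℝ, 0 ≤ t → x t = cosFT x t) ↔
      (∀ η : ℝ, mellin' x (1 / 2 + (η : ℂ) * Complex.I) *
          (2 : ℂ) ^ (-((η : ℂ) * Complex.I) / 2) /
            Complex.Gamma (1 / 4 + (η : ℂ) * Complex.I / 2) =
        mellin' x (1 / 2 - (η : ℂ) * Complex.I) *
          (2 : ℂ) ^ ((η : ℂ) * Complex.I / 2) /
            Complex.Gamma (1 / 4 - (η : ℂ) * Complex.I / 2))) := by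
  exact eigenfunction_iff_mellin_functional_equation_general x hx1 hxc
end
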